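/- arXiv:math/0203237 — 8 statements merged into one kernel-verified Lean document; each statement's English description precedes it below -/
import Mathlib

section
/- Let U be an open subset of a separable infinite-dimensional real Hilbert space X. For every continuous mapping f : U → ℝ^m and every continuous positive function ε : U → (0,∞), there exists a C^∞ smooth mapping ψ : U → ℝ^m such that ‖f(x) − ψ(x)‖ ≤ ε(x) for all x ∈ U and the Fréchet derivative dψ(x) : X → ℝ^m is surjective for every x ∈ U (that is, ψ has no critical points). -/
/-! The approximant has the form `ψ x = ∑ W n i x • (f (a i) + δ i • ℓ x)`, where the `W n i` are smooth
weights summing to `1` subordinate to small balls `ball (a i) (r i)` that cover `U`, the `δ i > 0` are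
small, and `ℓ x = (⟨g 0, x⟩, …, ⟨g (m - 1), x⟩)` is a fixed linear map. By convexity `ψ` is close to `f`.
If `h` is a direction in which all weights are stationary at `x`, then `dψ(x) h = D • ℓ h` with
`D = ∑ W n i x * δ i > 0`, so `dψ(x)` is onto as soon as `ℓ` maps such directions onto `ℝ^m`.

Weights with this property are built in `exists_weights`. With cutoffs depending on `‖x - a i‖ ^ 2`
alone, stationarity would require `h ⟂ x - a i`. The centres `a i` have finite support in an
orthonormal basis, so they are easily avoided, but `x` itself is not. To compensate, bounded
perturbations `Θ n` are added to the squared norms, each depending on a block of coordinates which the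
centres used so far do not see, such that `‖x‖ ^ 2 + Θ n x` has no critical point along that block.
A regular direction of this function supplies the correction which makes a basis vector stationary for
all active cutoffs at once. Consecutive stages share one perturbation, so a single correction serves
the two stages that can be active at a point.

The existence of such bounded perturbations is where infinite dimension enters
(`exists_bounded_perturbation`): it rests on a self-adjoint operator `A` on `ℓ²` and a vector `b` such
that `(A + κ) z = b` has no solution for `|κ| < 1` and only solutions in a fixed ball for `|κ| ≥ 1`.
-/

open Metric Set
open scoped Topology ContDiff lp

/-! ### A self-adjoint operator on `ℓ²` and an equation without solutions -/

theorem exists_isometry_of_orthonormal {X : Type*} [NormedAddCommGroup X]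
    [InnerProductSpace ℝ X] [CompleteSpace X] (u : ℕ → X) (hu : Orthonormal ℝ u) :
    ∃ I : ℓ²(ℕ, ℝ) →ₗᵢ[ℝ] X, ∀ n, I (lp.single 2 n (1 : ℝ)) = u n := by
  refine ⟨hu.orthogonalFamily.linearIsometry, fun n => ?_⟩
  rw [OrthogonalFamily.linearIsometry_apply_single]
  simp [LinearIsometry.toSpanSingleton]

theorem l2_inner_single (n : ℕ) (z : ℓ²(ℕ, ℝ)) :
    inner ℝ (lp.single 2 n (1 : ℝ)) z = z n := by
  rw [lp.inner_single_left]; simp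

theorem l2_ext {z : ℓ²(ℕ, ℝ)}
    (h : ∀ n, inner ℝ (lp.single 2 n (1 : ℝ) : ℓ²(ℕ, ℝ)) z = 0) : z = 0 := by
  ext n
  simpa [l2_inner_single] using h n

theorem l2_orthonormal : Orthonormal ℝ (fun n => (lp.single 2 n (1 : ℝ) : ℓ²(ℕ, ℝ))) := by
  rw [orthonormal_iff_ite]
  intro i j
  rw [l2_inner_single]
  by_cases h : i = j
  · subst h; simp
  · simp [h]

theorem l2_tendsto (z : ℓ²(ℕ, ℝ)) : Filter.Tendsto (fun n => z n) Filter.atTop (𝓝 0) := by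
  have h1 : Summable fun n => ‖z n‖ ^ (2 : ENNReal).toReal :=
    (lp.memℓp z).summable (by norm_num)
  have h2 : Filter.Tendsto (fun n => (z n) ^ 2) Filter.atTop (𝓝 0) := by
    refine h1.tendsto_atTop_zero.congr fun n => ?_
    simp
  have h3 := h2.sqrt
  simp only [Real.sqrt_zero, Real.sqrt_sq_eq_abs] at h3
  exact (tendsto_zero_iff_abs_tendsto_zero _).2 h3

/-- The symmetric Jacobi matrix with zero diagonal and off-diagonal entries `1 / 2`: the real part
`(S + S†) / 2` of the right shift. -/
theorem exists_jacobi : ∃ A : ℓ²(ℕ, ℝ) →L[ℝ] ℓ²(ℕ, ℝ),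
    (∀ y z, inner ℝ (A y) z = inner ℝ y (A z)) ∧ (∀ z, ‖A z‖ ≤ ‖z‖) ∧
    (∀ z, (A z) 0 = z 1 / 2) ∧ (∀ z n, (A z) (n + 1) = (z n + z (n + 2)) / 2) := by
  obtain ⟨S, hS⟩ := exists_isometry_of_orthonormal (X := ℓ²(ℕ, ℝ))
    (fun n => lp.single 2 (n + 1) (1 : ℝ)) (l2_orthonormal.comp _ (add_left_injective 1))
  set T := S.toContinuousLinearMap with hT
  have hadj : ∀ z n, (ContinuousLinearMap.adjoint T z) n = z (n + 1) := by
    intro z n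
    rw [← l2_inner_single, ContinuousLinearMap.adjoint_inner_right, ← l2_inner_single (n + 1),
      ← hS n]; rfl
  have hS0 : ∀ z, (T z) 0 = 0 := by
    intro z
    rw [← l2_inner_single, ← ContinuousLinearMap.adjoint_inner_left]
    have : ContinuousLinearMap.adjoint T (lp.single 2 0 (1 : ℝ)) = 0 := by
      ext n
      rw [hadj]
      simp
    rw [this, inner_zero_left]
  have hSn : ∀ z n, (T z) (n + 1) = z n := by
    intro z n
    rw [← l2_inner_single, ← hS n, ← l2_inner_single n]
    exact S.inner_map_map _ _
  refine ⟨(1 / 2 : ℝ) • (T + ContinuousLinearMap.adjoint T), ?_, ?_, ?_, ?_⟩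
  · intro y z
    simp only [smul_apply, add_apply, inner_smul_left,
      inner_smul_right, inner_add_left, inner_add_right, ContinuousLinearMap.adjoint_inner_left,
      ContinuousLinearMap.adjoint_inner_right]
    simp; ring
  · intro z
    have h1 : ‖T z‖ = ‖z‖ := S.norm_map z
    have h2 : ‖ContinuousLinearMap.adjoint T z‖ ≤ ‖z‖ := by
      refine (ContinuousLinearMap.le_opNorm _ _).trans ?_
      rw [LinearIsometryEquiv.norm_map]
      exact mul_le_of_le_one_left (norm_nonneg _) S.norm_toContinuousLinearMap_le
    simp only [smul_apply, add_apply, norm_smul]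
    have := norm_add_le (T z) (ContinuousLinearMap.adjoint T z)
    norm_num
    linarith
  · intro z
    change (1 / 2 : ℝ) * ((T z) 0 + (ContinuousLinearMap.adjoint T z) 0) = _
    rw [hS0, hadj]; ring
  · intro z n
    change (1 / 2 : ℝ) * ((T z) (n + 1) + (ContinuousLinearMap.adjoint T z) (n + 1)) = _
    rw [hSn, hadj]; ring

/-- A null sequence solving the recurrence with `|κ| ≤ 1` vanishes, because the quadratic form
`y (n + 1) ^ 2 + 2 κ y n y (n + 1) + y n ^ 2` is conserved and positive semidefinite. -/
theorem recurrence_eq_zero (κ : ℝ) (hκ : |κ| ≤ 1) (y : ℕ → ℝ)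
    (hy : Filter.Tendsto y Filter.atTop (𝓝 0))
    (hrec : ∀ n, y (n + 2) + 2 * κ * y (n + 1) + y n = 0) : y 0 = 0 ∧ y 1 = 0 := by
  set E : ℕ → ℝ := fun n => y (n + 1) ^ 2 + 2 * κ * y n * y (n + 1) + y n ^ 2 with hE
  have hconst : ∀ n, E n = E 0 := by
    intro n
    induction n with
    | zero => rfl
    | succ n ih =>
      rw [← ih]
      have := hrec n
      have h2 : y (n + 2) = - (2 * κ * y (n + 1) + y n) := by linarith
      simp only [hE]
      rw [show n + 1 + 1 = n + 2 from rfl, h2]; ring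
  have hlim : Filter.Tendsto E Filter.atTop (𝓝 0) := by
    have h1 := hy.comp (Filter.tendsto_add_atTop_nat 1)
    have := ((h1.pow 2).add ((hy.const_mul (2 * κ)).mul h1)).add (hy.pow 2)
    simpa [hE] using this
  have h0 : E 0 = 0 := by
    refine tendsto_nhds_unique ?_ hlim
    rw [show E = fun _ => E 0 from funext hconst]
    exact tendsto_const_nhds
  simp only [hE] at h0
  norm_num at h0
  have hsq : (y 1 + κ * y 0) ^ 2 + y 0 ^ 2 * (1 - κ ^ 2) = 0 := by linarith
  have hκ2 : κ ^ 2 ≤ 1 := by rw [← sq_abs]; nlinarith [abs_nonneg κ]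
  have hnn : 0 ≤ y 0 ^ 2 * (1 - κ ^ 2) := mul_nonneg (sq_nonneg _) (by linarith)
  have hy1 : y 1 = -κ * y 0 := by
    have : (y 1 + κ * y 0) ^ 2 = 0 := by nlinarith [sq_nonneg (y 1 + κ * y 0)]
    have := pow_eq_zero_iff two_ne_zero |>.1 this
    linarith
  have hy0 : y 0 = 0 := by
    have ha : y 0 ^ 2 * (1 - κ ^ 2) = 0 := by nlinarith [sq_nonneg (y 1 + κ * y 0)]
    rcases mul_eq_zero.1 ha with h | h
    · exact pow_eq_zero_iff two_ne_zero |>.1 h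
    · -- for `κ = ±1` the recurrence degenerates to `y (n + 1) = -κ * y n`, so `|y n|` is constant
      have hstep : ∀ n, y (n + 1) = -κ * y n := by
        intro n
        induction n with
        | zero => exact hy1
        | succ n ih =>
          have h1 := hrec n
          have h2 : y n = -κ * y (n + 1) := by
            rw [ih]; linear_combination (y n) * h
          linarith
      have hsqc : ∀ n, y n ^ 2 = y 0 ^ 2 := by
        intro n
        induction n with
        | zero => rfl
        | succ n ih => rw [hstep, ← ih]; linear_combination -(y n ^ 2) * h
      have hl : Filter.Tendsto (fun n => y n ^ 2) Filter.atTop (𝓝 0) := by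
        simpa using hy.pow 2
      have : y 0 ^ 2 = 0 := by
        refine tendsto_nhds_unique ?_ hl
        rw [funext hsqc]
        exact tendsto_const_nhds
      exact pow_eq_zero_iff two_ne_zero |>.1 this
  exact ⟨hy0, by rw [hy1, hy0, mul_zero]⟩

theorem norm_le_of_shifted {Z : Type*} [NormedAddCommGroup Z] [InnerProductSpace ℝ Z]
    (B : Z →L[ℝ] Z) (hB : ∀ z, 0 ≤ inner ℝ (B z) z) (t : ℝ) (ht : 0 ≤ t) (y z : Z)
    (hz : B (y - z) = t • z) (hinj : t = 0 → z = y) : ‖z‖ ≤ ‖y‖ := by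
  rcases ht.eq_or_lt with h | h
  · rw [hinj h.symm]
  · have h1 := hB (y - z)
    rw [hz, inner_smul_left, inner_sub_right] at h1
    simp only [conj_trivial] at h1
    have h2 : inner ℝ z z ≤ inner ℝ z y := by
      have := nonneg_of_mul_nonneg_right h1 h
      linarith
    rw [real_inner_self_eq_norm_sq] at h2
    have h3 := real_inner_le_norm z y
    by_contra hcon
    push Not at hcon
    nlinarith [norm_nonneg y, norm_nonneg z]

/-- There are a self-adjoint contraction `A` and a vector `b` such that `(A + κ) z = b` has no solution
for `|κ| < 1`, while all its solutions for `|κ| ≥ 1` lie in one ball. The operator is the Jacobi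
matrix above and `b = (1 - A ^ 2) c`, with `c` the first basis vector. For `κ ≥ 1`, rewriting the
equation as `(A + 1) (y - z) = (κ - 1) z` with `y = c - A c` and using `A + 1 ≥ 0` gives
`‖z‖ ≤ ‖y‖`; the case `κ ≤ -1` is symmetric. -/
theorem exists_operator_avoiding : ∃ (A : ℓ²(ℕ, ℝ) →L[ℝ] ℓ²(ℕ, ℝ)) (b : ℓ²(ℕ, ℝ)),
    (∀ y z, inner ℝ (A y) z = inner ℝ y (A z)) ∧ (∀ z, ‖A z‖ ≤ ‖z‖) ∧
    ∀ (κ : ℝ) (z : ℓ²(ℕ, ℝ)), A z + κ • z = b → 1 ≤ |κ| ∧ ‖z‖ ≤ 2 := by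
  obtain ⟨A, hsym, hnorm, h0, hn⟩ := exists_jacobi
  set c : ℓ²(ℕ, ℝ) := lp.single 2 0 (1 : ℝ) with hc
  have hcn : ‖c‖ = 1 := l2_orthonormal.1 0
  have hc0 : c 0 = 1 := by simp [hc]
  have hcs : ∀ n, c (n + 1) = 0 := by intro n; simp [hc]
  have hinner : ∀ z, |inner ℝ (A z) z| ≤ ‖z‖ ^ 2 := fun z => by
    have h1 := abs_real_inner_le_norm (A z) z
    nlinarith [hnorm z, norm_nonneg z]
  -- for `|κ| < 1` the coordinates of `z` obey the homogeneous recurrence from index 2 on, so they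
  -- vanish there; the three remaining equations then force `κ ^ 2 = 1`
  have key : ∀ (κ : ℝ) (z : ℓ²(ℕ, ℝ)), A z + κ • z = c - A (A c) → 1 ≤ |κ| := by
    intro κ z hz
    by_contra hcon
    push Not at hcon
    have hco : ∀ n, (A z) n + κ * z n = c n - (A (A c)) n := by
      intro n
      exact congrArg (fun w : ℓ²(ℕ, ℝ) => w n) hz
    have e0 := hco 0
    have e1 := hco 1
    have e2 := hco 2
    have hrec : ∀ n, z (n + 2 + 2) + 2 * κ * z (n + 2 + 1) + z (n + 2) = 0 := by
      intro n
      have := hco (n + 3)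
      rw [hn z (n + 2), hn _ (n + 2), hn c (n + 1), hn c (n + 3), hcs] at this
      simp only [hcs, add_assoc] at this
      norm_num at this ⊢
      linarith
    obtain ⟨z2, z3⟩ := recurrence_eq_zero κ hcon.le (fun n => z (n + 2))
      ((l2_tendsto z).comp (Filter.tendsto_add_atTop_nat 2)) hrec
    simp only [Nat.reduceAdd] at z2 z3
    rw [h0, h0, hn c 0, hc0, hcs] at e0
    rw [hn z 0, hn _ 0, h0, hn c 1, hcs] at e1
    rw [hn z 1, hn _ 1, hn c 0, hn c 2, hcs] at e2
    simp only [hcs 2, hcs 3, hc0, zero_add, Nat.reduceAdd] at e0 e1 e2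
    norm_num [hcs 0, hcs 1, hcs 2, hcs 3, hc0, z2, z3] at e0 e1 e2
    have q1 : z 1 = -1/2 := by linarith
    have q0 : z 0 = κ := by rw [q1] at e1; linarith
    rw [q1, q0] at e0
    have : κ ^ 2 < 1 := by rw [← sq_abs]; nlinarith [abs_nonneg κ]
    nlinarith
  refine ⟨A, c - A (A c), hsym, hnorm, fun κ z hz => ⟨key κ z hz, ?_⟩⟩
  have hinj : ∀ (κ : ℝ), |κ| ≤ 1 → ∀ w : ℓ²(ℕ, ℝ), A w + κ • w = 0 → w = 0 := by
    intro κ hκ w hw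
    have hco : ∀ n, (A w) n + κ * w n = 0 := fun n =>
      congrArg (fun v : ℓ²(ℕ, ℝ) => v n) hw
    ext k
    have h := recurrence_eq_zero κ hκ (fun n => w (n + k))
      ((l2_tendsto w).comp (Filter.tendsto_add_atTop_nat k)) fun n => by
        have h1 := hco (n + k + 1)
        rw [hn w (n + k)] at h1
        rw [show n + 2 + k = n + k + 2 by ring, show n + 1 + k = n + k + 1 by ring]
        linarith
    simpa using h.1
  have hAc : ‖A c‖ ≤ 1 := (hnorm c).trans hcn.le
  rcases le_abs.1 (key κ z hz) with hκ | hκ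
  · refine (norm_le_of_shifted (A + 1) (fun w => ?_) (κ - 1) (by linarith) (c - A c) z ?_ ?_).trans
      ((norm_sub_le _ _).trans (by linarith))
    · have h1 := (abs_le.1 (hinner w)).1
      have h2 : inner ℝ ((A + 1) w) w = inner ℝ (A w) w + ‖w‖ ^ 2 := by
        rw [← real_inner_self_eq_norm_sq, ← inner_add_left]; rfl
      linarith
    · have h1 : κ • z = c - A (A c) - A z := by rw [← hz]; abel
      have h2 : (A + 1) (c - A c - z) = A (c - A c - z) + (c - A c - z) := rfl
      rw [h2, sub_smul, h1, one_smul, map_sub, map_sub]; abel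
    · intro ht
      have h1 : κ = 1 := by linarith
      refine (sub_eq_zero.1 (hinj 1 (by simp) (c - A c - z) ?_)).symm
      rw [one_smul, map_sub, map_sub]
      rw [h1, one_smul] at hz
      have h2 : A z = c - A (A c) - z := by rw [← hz]; abel
      rw [h2]; abel
  · refine (norm_le_of_shifted (1 - A) (fun w => ?_) (-κ - 1) (by linarith) (-(c + A c)) z
      ?_ ?_).trans ?_
    · have h1 := (abs_le.1 (hinner w)).2
      have h2 : inner ℝ ((1 - A) w) w = ‖w‖ ^ 2 - inner ℝ (A w) w := by
        rw [← real_inner_self_eq_norm_sq, ← inner_sub_left]; rfl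
      linarith
    · have h1 : κ • z = c - A (A c) - A z := by rw [← hz]; abel
      have h2 : (1 - A) (-(c + A c) - z) = (-(c + A c) - z) - A (-(c + A c) - z) := rfl
      rw [h2, sub_smul, neg_smul, h1, one_smul, map_sub, map_neg, map_add]; abel
    · intro ht
      have h1 : κ = -1 := by linarith
      refine (sub_eq_zero.1 (hinj (-1) (by simp) (-(c + A c) - z) ?_)).symm
      rw [neg_one_smul, map_sub, map_neg, map_add]
      rw [h1, neg_one_smul] at hz
      have h2 : A z = c - A (A c) + z := by rw [← hz]; abel
      rw [h2]; abel
    · rw [norm_neg]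
      exact (norm_add_le _ _).trans (by linarith)

/-! ### Bounded perturbations of the squared norm without critical points -/

/-- A bounded smooth `θ` on `ℓ²` such that `‖z‖ ^ 2 + θ z` has no critical point. It is
`θ z = -2 σ(‖z‖ ^ 2) w z` with `w z = ⟨A z, z⟩ - 2 ⟨b, z⟩` and `σ` a cutoff. A critical point gives
a solution of `(A + κ) z = b`; it has norm at most `2`, where `σ = 1`, so that `κ = -1 / 2`, which is
excluded. -/
theorem exists_bounded_perturbation : ∃ (θ : ℓ²(ℕ, ℝ) → ℝ) (C : ℝ), 0 < C ∧ ContDiff ℝ ∞ θ ∧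
    (∀ z, |θ z| ≤ C) ∧ ∀ z, ∃ h, 2 * inner ℝ z h + fderiv ℝ θ z h = 1 := by
  obtain ⟨A, b, hsym, hnorm, hA⟩ := exists_operator_avoiding
  set s : ℝ → ℝ := fun u => Real.smoothTransition (5 - u) with hs
  set w : ℓ²(ℕ, ℝ) → ℝ := fun z => inner ℝ (A z) z - 2 * inner ℝ b z with hw
  have hscd : ContDiff ℝ ∞ s := Real.smoothTransition.contDiff.comp (contDiff_const.sub contDiff_id)
  have hwcd : ContDiff ℝ ∞ w :=
    (A.contDiff.inner ℝ contDiff_id).sub (contDiff_const.mul (contDiff_const.inner ℝ contDiff_id))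
  have hs0 : ∀ u, 0 ≤ s u := fun u => Real.smoothTransition.nonneg _
  have hs1 : ∀ u, s u ≤ 1 := fun u => Real.smoothTransition.le_one _
  have hsone : ∀ u, u ≤ 4 → s u = 1 := fun u hu =>
    Real.smoothTransition.one_of_one_le (by linarith)
  have hszero : ∀ u, 5 ≤ u → s u = 0 := fun u hu =>
    Real.smoothTransition.zero_of_nonpos (by linarith)
  refine ⟨fun z => -2 * (s (‖z‖ ^ 2) * w z), 2 * (5 + 6 * ‖b‖), by positivity, ?_, ?_, ?_⟩
  · exact contDiff_const.mul ((hscd.comp (contDiff_id.norm_sq ℝ)).mul hwcd)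
  · intro z
    rw [abs_mul, abs_mul, abs_of_nonneg (hs0 _)]
    norm_num
    by_cases hz : 5 ≤ ‖z‖ ^ 2
    · rw [hszero _ hz, zero_mul]; positivity
    · push Not at hz
      have hz3 : ‖z‖ ≤ 3 := by nlinarith [norm_nonneg z]
      have h1 := abs_real_inner_le_norm (A z) z
      have h2 := abs_real_inner_le_norm b z
      have h3 : |w z| ≤ |inner ℝ (A z) z| + 2 * |inner ℝ b z| := by
        refine (abs_sub _ _).trans ?_
        rw [abs_mul]; norm_num
      have h4 : ‖A z‖ * ‖z‖ ≤ 5 := by nlinarith [hnorm z, norm_nonneg z]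
      have h5 : ‖b‖ * ‖z‖ ≤ 3 * ‖b‖ := by nlinarith [norm_nonneg b]
      have h6 : |w z| ≤ 5 + 6 * ‖b‖ := by linarith
      calc s (‖z‖ ^ 2) * |w z| ≤ 1 * |w z| := by gcongr; exact hs1 _
        _ ≤ _ := by linarith
  · intro z
    have hsd : HasDerivAt s (deriv s (‖z‖ ^ 2)) (‖z‖ ^ 2) :=
      (hscd.differentiable (by simp) _).hasDerivAt
    set d := deriv s (‖z‖ ^ 2) with hd
    have hN := (hasStrictFDerivAt_norm_sq z).hasFDerivAt
    have hwd := (A.hasFDerivAt (x := z) |>.inner ℝ (hasFDerivAt_id z)).sub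
      (((hasFDerivAt_const b z).inner ℝ (hasFDerivAt_id z)).const_mul 2)
    have hθ := ((hsd.comp_hasFDerivAt z hN).mul hwd).const_mul (-2)
    set G : ℓ²(ℕ, ℝ) := (2 * (1 - 2 * d * w z)) • z - (4 * s (‖z‖ ^ 2)) • (A z - b) with hG
    have hder : ∀ h, 2 * inner ℝ z h + fderiv ℝ (fun z => -2 * (s (‖z‖ ^ 2) * w z)) z h
        = inner ℝ G h := by
      intro h
      have e : fderiv ℝ (fun z => -2 * (s (‖z‖ ^ 2) * w z)) z = _ := hθ.fderiv
      rw [e]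
      have e2 : inner ℝ (A h) z = inner ℝ (A z) h := by rw [hsym, real_inner_comm]
      simp [hG, inner_sub_left, inner_smul_left, e2, hw]
      ring
    have hG0 : G ≠ 0 := by
      intro h0
      rw [hG, sub_eq_zero] at h0
      by_cases hσ : s (‖z‖ ^ 2) = 0
      · have hd0 : d = 0 := IsLocalMin.hasDerivAt_eq_zero
          (Filter.Eventually.of_forall fun u => by rw [hσ]; exact hs0 u) hsd
        rw [hσ, hd0] at h0
        simp at h0
        rw [h0, hsone _ (by simp)] at hσ
        exact one_ne_zero hσ
      · have hsol : A z + (-(1 - 2 * d * w z) / (2 * s (‖z‖ ^ 2))) • z = b := by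
          have h1 : (4 * s (‖z‖ ^ 2))⁻¹ • ((2 * (1 - 2 * d * w z)) • z) = A z - b := by
            rw [h0, smul_smul, inv_mul_cancel₀ (by simpa using hσ), one_smul]
          have h2 : (-(1 - 2 * d * w z) / (2 * s (‖z‖ ^ 2))) • z = b - A z := by
            rw [← neg_sub (A z) b, ← h1, smul_smul, ← neg_smul]
            congr 1
            field_simp
            ring
          rw [h2]; abel
        obtain ⟨h1, h2⟩ := hA _ _ hsol
        have h4 : ‖z‖ ^ 2 ≤ 4 := by nlinarith [norm_nonneg z]
        have hd0 : d = 0 := IsLocalMax.hasDerivAt_eq_zero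
          (Filter.Eventually.of_forall fun u => by rw [hsone _ h4]; exact hs1 u) hsd
        rw [hd0, hsone _ h4] at h1
        norm_num at h1
    refine ⟨(‖G‖ ^ 2)⁻¹ • G, ?_⟩
    rw [hder, inner_smul_right, real_inner_self_eq_norm_sq, inv_mul_cancel₀]
    simpa using hG0

/-- The previous perturbation, rescaled to size `η` and transported to the closed span of an
orthonormal sequence `u`: it depends only on the coordinates along `u`, and the derivative of
`‖x‖ ^ 2 + Θ x` is nonzero already in directions from that closed span, which is expressed as being
orthogonal to whatever is orthogonal to all `u j`. -/
theorem exists_block_function {X : Type*} [NormedAddCommGroup X]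
    [InnerProductSpace ℝ X] [CompleteSpace X] (u : ℕ → X) (hu : Orthonormal ℝ u)
    (η : ℝ) (hη : 0 < η) :
    ∃ Θ : X → ℝ, ContDiff ℝ ∞ Θ ∧ (∀ x, |Θ x| ≤ η) ∧
      (∀ x h, (∀ j, inner ℝ (u j) h = 0) → fderiv ℝ Θ x h = 0) ∧
      ∀ x, ∃ h, (∀ y, (∀ j, inner ℝ (u j) y = 0) → inner ℝ y h = 0) ∧
        2 * inner ℝ x h + fderiv ℝ Θ x h = 1 := by
  obtain ⟨θ, C, hC, hθ, hb, hsub⟩ := exists_bounded_perturbation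
  obtain ⟨I, hI⟩ := exists_isometry_of_orthonormal u hu
  set J := ContinuousLinearMap.adjoint I.toContinuousLinearMap with hJ
  have hJu : ∀ y, (∀ j, inner ℝ (u j) y = 0) → J y = 0 := by
    intro y hy
    refine l2_ext fun n => ?_
    rw [hJ, ContinuousLinearMap.adjoint_inner_right]
    have := hy n
    rwa [← hI n] at this
  have hJI : ∀ z, J (I z) = z := by
    intro z
    refine ext_inner_left ℝ fun y => ?_
    rw [hJ, ContinuousLinearMap.adjoint_inner_right]
    exact I.inner_map_map _ _
  have hIJ : ∀ x z, inner ℝ x (I z) = inner ℝ (J x) z := by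
    intro x z
    rw [hJ, ContinuousLinearMap.adjoint_inner_left]; rfl
  obtain ⟨s, hs, hsC⟩ : ∃ s : ℝ, 0 < s ∧ s ^ 2 * C ≤ η := by
    refine ⟨Real.sqrt (η / C), by positivity, ?_⟩
    rw [Real.sq_sqrt (by positivity)]
    field_simp; rfl
  set L : X →L[ℝ] ℓ²(ℕ, ℝ) := s⁻¹ • J with hL
  have hd : ∀ x, HasFDerivAt (fun x => s ^ 2 * θ (L x)) (s ^ 2 • (fderiv ℝ θ (L x)).comp L) x :=
    fun x => (((hθ.differentiable (by simp) (L x)).hasFDerivAt).comp x L.hasFDerivAt).const_mul _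
  refine ⟨fun x => s ^ 2 * θ (L x), contDiff_const.mul (hθ.comp L.contDiff), ?_, ?_, ?_⟩
  · intro x
    rw [abs_mul, abs_of_nonneg (sq_nonneg s)]
    exact (mul_le_mul_of_nonneg_left (hb _) (sq_nonneg s)).trans hsC
  · intro x h hh
    rw [(hd x).fderiv]
    simp [hL, hJu h hh]
  · intro x
    obtain ⟨z, hz⟩ := hsub (L x)
    refine ⟨s⁻¹ • I z, ?_, ?_⟩
    · intro y hy
      rw [inner_smul_right, hIJ, hJu y hy, inner_zero_left, mul_zero]
    · rw [(hd x).fderiv, inner_smul_right, hIJ]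
      have e1 : L (I z) = s⁻¹ • z := by
        simp [hL, hJI]
      have e2 : inner ℝ (L x) z = s⁻¹ * inner ℝ (J x) z := by
        simp [hL, inner_smul_left]
      rw [← hz, e2]
      simp [e1]
      field_simp

/-! ### Bases -/

/-- A doubly indexed orthonormal basis, with the vectors of finite support dense. -/
theorem exists_double_basis {X : Type*} [NormedAddCommGroup X] [InnerProductSpace ℝ X]
    [CompleteSpace X] [TopologicalSpace.SeparableSpace X] (hX : ¬ FiniteDimensional ℝ X) :
    ∃ v : ℕ × ℕ → X, Orthonormal ℝ v ∧ Dense {a : X | {q | inner ℝ (v q) a ≠ 0}.Finite} := by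
  obtain ⟨w, b, hb⟩ := exists_hilbertBasis ℝ X
  have hbo : Orthonormal ℝ b := b.orthonormal
  have hcount : Countable w := by
    have hdisj : (univ : Set w).PairwiseDisjoint fun i => ball (b i) (1 / 2) := by
      intro i _ j _ hij
      refine ball_disjoint_ball ?_
      have h1 : ‖b i - b j‖ ^ 2 = 2 := by
        rw [norm_sub_sq_real, hbo.1, hbo.1, hbo.2 hij]; norm_num
      rw [dist_eq_norm]
      nlinarith [norm_nonneg (b i - b j)]
    have := hdisj.countable_of_isOpen (fun i _ => isOpen_ball)
      (fun i _ => ⟨b i, mem_ball_self (by norm_num)⟩)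
    exact countable_univ_iff.1 this
  have hinf : Infinite w := by
    by_contra hfin
    rw [not_infinite_iff_finite] at hfin
    apply hX
    have h1 : FiniteDimensional ℝ (Submodule.span ℝ (range b)) :=
      FiniteDimensional.span_of_finite ℝ (finite_range b)
    have h2 : Submodule.span ℝ (range b) = ⊤ := by
      rw [← b.dense_span]
      exact (Submodule.closed_of_finiteDimensional _).submodule_topologicalClosure_eq.symm
    rw [h2] at h1
    exact Module.Finite.equiv (Submodule.topEquiv (R := ℝ) (M := X))
  obtain ⟨e⟩ := nonempty_equiv_of_countable (α := ℕ × ℕ) (β := w)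
  refine ⟨b ∘ e, hbo.comp e e.injective, ?_⟩
  have h1 : Dense (Submodule.span ℝ (range b) : Set X) :=
    Submodule.dense_iff_topologicalClosure_eq_top.2 b.dense_span
  refine h1.mono fun a ha => ?_
  refine Submodule.span_induction (p := fun a _ => {q | inner ℝ ((b ∘ e) q) a ≠ 0}.Finite)
    ?_ ?_ ?_ ?_ ha
  · rintro _ ⟨i, rfl⟩
    refine (finite_singleton (e.symm i)).subset fun q hq => ?_
    by_contra hne
    refine hq (hbo.2 fun h => hne ?_)
    rw [mem_singleton_iff, ← h, Equiv.symm_apply_apply]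
  · simp
  · intro x y _ _ hx hy
    refine (hx.union hy).subset fun q hq => ?_
    by_contra hne
    simp only [mem_union, mem_ofPred_eq, not_or, not_not] at hne
    exact hq (by rw [inner_add_right, hne.1, hne.2, add_zero])
  · intro c x _ hx
    refine hx.subset fun q hq hne => hq ?_
    rw [inner_smul_right, hne, mul_zero]

/-- Vectors `g p`, each supported on the whole row `p` of the basis. -/
theorem exists_row_vectors {X : Type*} [NormedAddCommGroup X] [InnerProductSpace ℝ X]
    [CompleteSpace X] (v : ℕ × ℕ → X) (hv : Orthonormal ℝ v) :
    ∃ g : ℕ → X, ∀ k j p, inner ℝ (v (k, j)) (g p) = if k = p then (1 / 2 : ℝ) ^ j else 0 := by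
  refine ⟨fun p => ∑' j, (1 / 2 : ℝ) ^ j • v (p, j), fun k j p => ?_⟩
  have hsum : Summable fun j => (1 / 2 : ℝ) ^ j • v (p, j) := by
    refine Summable.of_norm ?_
    simp only [norm_smul, hv.1, mul_one]
    refine summable_geometric_two.congr fun j => ?_
    rw [Real.norm_of_nonneg (by positivity)]
  rw [← innerSL_apply_apply ℝ, (innerSL ℝ (v (k, j))).map_tsum hsum]
  rw [tsum_eq_single j]
  · rw [innerSL_apply_apply, inner_smul_right, orthonormal_iff_ite.1 hv]
    simp
  · intro i hi
    rw [innerSL_apply_apply, inner_smul_right, orthonormal_iff_ite.1 hv]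
    simp [hi.symm]

/-! ### Ordered weights and their stationary directions -/

/-- `g` is differentiable at `x` and its derivative vanishes in the direction `h`. -/
def StationaryAlong {X : Type*} [NormedAddCommGroup X] [NormedSpace ℝ X] (x h : X)
    (g : X → ℝ) : Prop :=
  ∃ g' : X →L[ℝ] ℝ, HasFDerivAt g g' x ∧ g' h = 0

section StationaryAlong

variable {X : Type*} [NormedAddCommGroup X] [NormedSpace ℝ X] {x h : X}

theorem StationaryAlong.mul {f g : X → ℝ} (hf : StationaryAlong x h f)
    (hg : StationaryAlong x h g) : StationaryAlong x h (fun y => f y * g y) := by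
  obtain ⟨f', hf, hf0⟩ := hf
  obtain ⟨g', hg, hg0⟩ := hg
  exact ⟨_, hf.mul hg, by simp [hf0, hg0]⟩

theorem StationaryAlong.one_sub {f : X → ℝ} (hf : StationaryAlong x h f) :
    StationaryAlong x h (fun y => 1 - f y) := by
  obtain ⟨f', hf, hf0⟩ := hf
  exact ⟨_, hf.const_sub 1, by simp [hf0]⟩

theorem StationaryAlong.prod_range {f : ℕ → X → ℝ} (n : ℕ)
    (hf : ∀ i < n, StationaryAlong x h (f i)) :
    StationaryAlong x h (fun y => ∏ i ∈ Finset.range n, f i y) := by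
  induction n with
  | zero => exact ⟨0, by simpa using hasFDerivAt_const (1 : ℝ) x, rfl⟩
  | succ n ih =>
    simp only [Finset.prod_range_succ]
    exact (ih fun i hi => hf i (by omega)).mul (hf n (by omega))

end StationaryAlong

/-- The factor of `orderedWeight` left over once all cells `(l, i)` with `i ≤ l < n` have taken
their share. -/
def remainder {X : Type*} (β : ℕ → ℕ → X → ℝ) (n : ℕ) (x : X) : ℝ :=
  ∏ l ∈ Finset.range n, ∏ i ∈ Finset.range (l + 1), (1 - β l i x)

/-- The weights obtained from cutoff functions `β n i`, `i ≤ n`, by processing the pairs `(n, i)`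
in lexicographic order, each taking the fraction `β n i` of what its predecessors have left. -/
def orderedWeight {X : Type*} (β : ℕ → ℕ → X → ℝ) (n i : ℕ) (x : X) : ℝ :=
  remainder β n x * (β n i x * ∏ j ∈ Finset.range i, (1 - β n j x))

section orderedWeight

variable {X : Type*} (β : ℕ → ℕ → X → ℝ)

theorem sum_orderedWeight (n : ℕ) (x : X) :
    ∑ l ∈ Finset.range n, ∑ i ∈ Finset.range (l + 1), orderedWeight β l i x
      = 1 - remainder β n x := by
  have key : ∀ (f : ℕ → ℝ) (N : ℕ), ∑ i ∈ Finset.range N, f i * ∏ j ∈ Finset.range i, (1 - f j)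
      = 1 - ∏ j ∈ Finset.range N, (1 - f j) := by
    intro f N
    induction N with
    | zero => simp
    | succ N ih => rw [Finset.sum_range_succ, Finset.prod_range_succ, ih]; ring
  induction n with
  | zero => simp [remainder]
  | succ n ih =>
    rw [Finset.sum_range_succ, ih]
    simp only [orderedWeight]
    rw [← Finset.mul_sum, key (fun i => β n i x)]
    simp only [remainder, Finset.prod_range_succ _ n]
    ring

theorem remainder_eq_zero {n₀ i₀ n : ℕ} {x : X} (hi : i₀ ≤ n₀) (h1 : β n₀ i₀ x = 1)
    (hn : n₀ < n) : remainder β n x = 0 := by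
  refine Finset.prod_eq_zero (Finset.mem_range.2 hn) ?_
  exact Finset.prod_eq_zero (Finset.mem_range.2 (Nat.lt_succ_of_le hi)) (by rw [h1, sub_self])

theorem orderedWeight_nonneg (h0 : ∀ n i x, 0 ≤ β n i x) (h1 : ∀ n i x, β n i x ≤ 1) (n i : ℕ)
    (x : X) : 0 ≤ orderedWeight β n i x := by
  have h2 : ∀ n i, 0 ≤ 1 - β n i x := fun n i => sub_nonneg.2 (h1 n i x)
  exact mul_nonneg (Finset.prod_nonneg fun l _ => Finset.prod_nonneg fun i _ => h2 l i)
    (mul_nonneg (h0 n i x) (Finset.prod_nonneg fun j _ => h2 n j))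

variable [NormedAddCommGroup X] [NormedSpace ℝ X]

theorem contDiff_orderedWeight (hβ : ∀ n i, ContDiff ℝ ∞ (β n i)) (n i : ℕ) :
    ContDiff ℝ ∞ (orderedWeight β n i) := by
  have h : ∀ n i, ContDiff ℝ ∞ fun x => 1 - β n i x := fun n i => contDiff_const.sub (hβ n i)
  exact (contDiff_prod fun l _ => contDiff_prod fun i _ => h l i).mul
    ((hβ n i).mul (contDiff_prod fun j _ => h n j))

theorem stationaryAlong_orderedWeight {x h : X} {n i : ℕ} (hi : i ≤ n)
    (hβ : ∀ l ≤ n, ∀ j ≤ l, StationaryAlong x h (β l j)) :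
    StationaryAlong x h (orderedWeight β n i) := by
  refine (StationaryAlong.prod_range n fun l hl => StationaryAlong.prod_range (l + 1) fun j hj =>
    (hβ l hl.le j (by omega)).one_sub).mul ((hβ n le_rfl i hi).mul
      (StationaryAlong.prod_range i fun j hj => (hβ n le_rfl j (by omega)).one_sub))

end orderedWeight

/-- A smooth cutoff of a real variable, meant for `p < q`: `1` for `t ≤ p` and `0` for `q ≤ t`. -/
noncomputable def cutoff (p q t : ℝ) : ℝ := Real.smoothTransition ((q - t) / (q - p))

theorem cutoff_eq_one {p q t : ℝ} (hpq : p < q) (h : t ≤ p) : cutoff p q t = 1 :=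
  Real.smoothTransition.one_of_one_le ((one_le_div (sub_pos.2 hpq)).2 (by linarith))

theorem lt_of_cutoff_ne_zero {p q t : ℝ} (hpq : p < q) (h : cutoff p q t ≠ 0) : t < q := by
  by_contra hcon
  push Not at hcon
  exact h (Real.smoothTransition.zero_of_nonpos
    (div_nonpos_of_nonpos_of_nonneg (by linarith) (by linarith)))

theorem contDiff_cutoff (p q : ℝ) : ContDiff ℝ ∞ (cutoff p q) :=
  Real.smoothTransition.contDiff.comp ((contDiff_const.sub contDiff_id).div_const _)

/-- Distinct rows `k n ≥ m` of the basis orthogonal to the centres `a 0, …, a n`, and sizes `η n`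
small compared with the squares of the radii `r 0, …, r n`. -/
theorem exists_rows_and_sizes {X : Type*} [NormedAddCommGroup X] [InnerProductSpace ℝ X]
    (v : ℕ × ℕ → X) (m : ℕ) (a : ℕ → X) (ha : ∀ i, {q | inner ℝ (v q) (a i) ≠ 0}.Finite)
    (r : ℕ → ℝ) (hr : ∀ i, 0 < r i) :
    ∃ (k : ℕ → ℕ) (η : ℕ → ℝ), Function.Injective k ∧ (∀ n, m ≤ k n) ∧
      (∀ n, ∀ i ≤ n, ∀ j, inner ℝ (v (k n, j)) (a i) = 0) ∧ (∀ n, 0 < η n) ∧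
      ∀ n, ∀ i ≤ n, η n ≤ (1 / 4) ^ n / 8 * r i ^ 2 := by
  have hK : ∀ i, ∃ K, ∀ k ≥ K, ∀ j, inner ℝ (v (k, j)) (a i) = 0 := by
    intro i
    obtain ⟨K, hK⟩ := ((ha i).image Prod.fst).bddAbove
    refine ⟨K + 1, fun k hk j => ?_⟩
    by_contra hne
    have : k ≤ K := hK ⟨(k, j), hne, rfl⟩
    omega
  choose K hK using hK
  have hη : ∀ n, ∃ η : ℝ, 0 < η ∧ ∀ i ≤ n, η ≤ (1 / 4) ^ n / 8 * r i ^ 2 := by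
    intro n
    obtain ⟨i₀, -, hi₀⟩ := Finset.exists_min_image (Finset.range (n + 1)) r ⟨0, by simp⟩
    refine ⟨(1 / 4) ^ n / 8 * r i₀ ^ 2, by have := hr i₀; positivity, fun i hi => ?_⟩
    have h1 := hi₀ i (by simpa [Nat.lt_succ_iff] using hi)
    have := (hr i₀).le
    gcongr
  choose η hη0 hη using hη
  refine ⟨fun n => m + n + ∑ i ∈ Finset.range (n + 1), K i, η, ?_, fun n => ?_, ?_, hη0, hη⟩
  · refine StrictMono.injective (strictMono_nat_of_lt_succ fun n => ?_)
    have : ∑ i ∈ Finset.range (n + 1), K i ≤ ∑ i ∈ Finset.range (n + 1 + 1), K i := by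
      rw [Finset.sum_range_succ _ (n + 1)]; omega
    omega
  · change m ≤ m + n + _
    omega
  · intro n i hi j
    refine hK i _ ?_ j
    have : K i ≤ ∑ i ∈ Finset.range (n + 1), K i := Finset.single_le_sum (f := K) (fun _ _ => Nat.zero_le _)
      (Finset.mem_range.2 (Nat.lt_succ_of_le hi))
    simp only [ge_iff_le]
    omega

/-- Smooth weights subordinate to the balls `ball (a i) (r i)`, locally finite on their union and
summing to `1` there, such that at each point the derivatives of all weights are annihilated by
directions that separate the vectors `g 0, …, g (m - 1)`.

The cutoffs are functions of `‖x - a i‖ ^ 2 + Θ n x + Θ (n + 1) x`, where `Θ n` is a block function for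
the row `k n`. At a point `x`, let `n₀` be the first stage at which `x` is strictly inside some cell.
Cutoffs of stages before `n₀ - 1` vanish at `x`, hence are stationary. Those of stages `n₀ - 1` and `n₀` both
involve `Θ n₀`, and neither involves any other block function that a vector from row `k n₀` could move;
a regular direction `h₀` of `‖x‖ ^ 2 + Θ n₀ x` therefore changes all of them at the same rate, and
subtracting a multiple of `h₀` from the basis vector `v (p, j)` makes all of them stationary. -/
theorem exists_weights {X : Type*} [NormedAddCommGroup X] [InnerProductSpace ℝ X]
    [CompleteSpace X] (v : ℕ × ℕ → X) (hv : Orthonormal ℝ v) (g : ℕ → X)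
    (hg : ∀ k j p, inner ℝ (v (k, j)) (g p) = if k = p then (1 / 2 : ℝ) ^ j else 0)
    (m : ℕ) (a : ℕ → X) (ha : ∀ i, {q | inner ℝ (v q) (a i) ≠ 0}.Finite)
    (r : ℕ → ℝ) (hr : ∀ i, 0 < r i) :
    ∃ W : ℕ → ℕ → X → ℝ, (∀ n i, ContDiff ℝ ∞ (W n i)) ∧ (∀ n i x, 0 ≤ W n i x) ∧
      (∀ n, ∀ i ≤ n, ∀ x, W n i x ≠ 0 → x ∈ ball (a i) (r i)) ∧
      ∀ i, ∀ x ∈ ball (a i) (r i), ∃ n₀ : ℕ,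
        (∀ᶠ y in 𝓝 x, ∀ n > n₀, ∀ i, W n i y = 0) ∧
        ∑ n ∈ Finset.range (n₀ + 1), ∑ i ∈ Finset.range (n + 1), W n i x = 1 ∧
        ∀ p < m, ∃ h, (∀ n ≤ n₀, ∀ i ≤ n, StationaryAlong x h (W n i)) ∧
          inner ℝ (g p) h ≠ 0 ∧ ∀ p' < m, p' ≠ p → inner ℝ (g p') h = 0 := by
  obtain ⟨k, η, hkinj, hkm, hka, hη0, hη⟩ := exists_rows_and_sizes v m a ha r hr
  choose Θ hΘcd hΘη hΘrow hΘreg using fun n =>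
    exists_block_function (fun j => v (k n, j))
      (hv.comp (fun j => (k n, j)) (Prod.mk_right_injective (k n))) (η n) (hη0 n)
  have hr2 : ∀ i, 0 < r i ^ 2 := fun i => pow_pos (hr i) 2
  have h4 : ∀ n, (0 : ℝ) < (1 / 4) ^ n := fun n => by positivity
  set N : ℕ → ℕ → X → ℝ := fun n i x => ‖x - a i‖ ^ 2 + Θ n x + Θ (n + 1) x with hN
  have hNcd : ∀ n i, ContDiff ℝ ∞ (N n i) := fun n i =>
    (((contDiff_id.sub contDiff_const).norm_sq ℝ).add (hΘcd n)).add (hΘcd (n + 1))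
  have hNd : ∀ n i x, HasFDerivAt (N n i) (2 • (innerSL ℝ (x - a i)).comp (.id ℝ X) +
      fderiv ℝ (Θ n) x + fderiv ℝ (Θ (n + 1)) x) x := fun n i x =>
    ((((hasFDerivAt_id x).sub_const (a i)).norm_sq).add
      ((hΘcd n).differentiable (by simp) x).hasFDerivAt).add
      ((hΘcd (n + 1)).differentiable (by simp) x).hasFDerivAt
  set P : ℕ → ℕ → ℝ := fun n i => (1 - (1 / 4) ^ n) * r i ^ 2 with hP
  set Q : ℕ → ℕ → ℝ := fun n i => (1 - (1 / 4) ^ n / 2) * r i ^ 2 with hQ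
  have hPQ : ∀ n i, P n i < Q n i := fun n i => by
    have := mul_pos (h4 n) (hr2 i)
    simp only [hP, hQ]; nlinarith
  set β : ℕ → ℕ → X → ℝ := fun n i x => cutoff (P n i) (Q n i) (N n i x) with hβ
  have hβ0 : ∀ n i x, 0 ≤ β n i x := fun n i x => Real.smoothTransition.nonneg _
  have hβ1 : ∀ n i x, β n i x ≤ 1 := fun n i x => Real.smoothTransition.le_one _
  have hβcd : ∀ n i, ContDiff ℝ ∞ (β n i) := fun n i => (contDiff_cutoff _ _).comp (hNcd n i)
  -- the gap between `Q n i` and `P (n + 1) i` absorbs the change of perturbation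
  have hstep : ∀ n, ∀ i ≤ n, ∀ x, β n i x ≠ 0 → N (n + 1) i x < P (n + 1) i := by
    intro n i hi x hne
    have h1 : N n i x < Q n i := lt_of_cutoff_ne_zero (hPQ n i) hne
    have h2 := (abs_le.1 (hΘη n x)).1
    have h3 := (abs_le.1 (hΘη (n + 1 + 1) x)).2
    have h5 := hη n i hi
    have h6 := hη (n + 1 + 1) i (by omega)
    have h7 := mul_pos (h4 n) (hr2 i)
    simp only [hN, hP, hQ, pow_succ] at h1 h6 ⊢
    nlinarith
  have hsupp : ∀ n, ∀ i ≤ n, ∀ x, β n i x ≠ 0 → x ∈ ball (a i) (r i) := by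
    intro n i hi x hne
    have h1 : N n i x < Q n i := lt_of_cutoff_ne_zero (hPQ n i) hne
    have h2 := (abs_le.1 (hΘη n x)).1
    have h3 := (abs_le.1 (hΘη (n + 1) x)).1
    have h5 := hη n i hi
    have h6 := hη (n + 1) i (by omega)
    have h7 := mul_pos (h4 n) (hr2 i)
    rw [mem_ball, dist_eq_norm]
    refine lt_of_pow_lt_pow_left₀ 2 (hr i).le ?_
    simp only [hN, hQ] at h1
    rw [pow_succ] at h6
    nlinarith
  refine ⟨orderedWeight β, contDiff_orderedWeight β hβcd, orderedWeight_nonneg β hβ0 hβ1, ?_, ?_⟩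
  · intro n i hi x hne
    refine hsupp n i hi x fun h => hne ?_
    simp only [orderedWeight, h, zero_mul, mul_zero]
  intro i x hx
  have hex : ∃ n, ∃ i ≤ n, N n i x < P n i := by
    rw [mem_ball, dist_eq_norm] at hx
    have hx2 : 0 < r i ^ 2 - ‖x - a i‖ ^ 2 := by nlinarith [norm_nonneg (x - a i)]
    have hlim : Filter.Tendsto (fun n : ℕ => 2 * r i ^ 2 * (1 / 4 : ℝ) ^ n) Filter.atTop (𝓝 0) := by
      simpa using (tendsto_pow_atTop_nhds_zero_of_lt_one (by norm_num : (0 : ℝ) ≤ 1 / 4)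
        (by norm_num)).const_mul (2 * r i ^ 2)
    obtain ⟨n, hn, hin⟩ := ((hlim.eventually_lt_const hx2).and (Filter.eventually_ge_atTop i)).exists
    refine ⟨n, i, hin, ?_⟩
    have h2 := (abs_le.1 (hΘη n x)).2
    have h3 := (abs_le.1 (hΘη (n + 1) x)).2
    have h5 := hη n i hin
    have h6 := hη (n + 1) i (by omega)
    have h7 := mul_pos (h4 n) (hr2 i)
    simp only [hN, hP]
    rw [pow_succ] at h6
    nlinarith
  classical
  obtain ⟨n₀, ⟨i₀, hi₀, hlt⟩, hmin⟩ : ∃ n₀, (∃ i ≤ n₀, N n₀ i x < P n₀ i) ∧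
      ∀ n < n₀, ¬ ∃ i ≤ n, N n i x < P n i :=
    ⟨Nat.find hex, Nat.find_spec hex, fun n hn => Nat.find_min hex hn⟩
  have hone : ∀ᶠ y in 𝓝 x, β n₀ i₀ y = 1 :=
    ((hNcd n₀ i₀).continuous.continuousAt.eventually_lt_const hlt).mono fun y hy =>
      cutoff_eq_one (hPQ n₀ i₀) hy.le
  refine ⟨n₀, hone.mono fun y hy n hn i => ?_, ?_, ?_⟩
  · rw [orderedWeight, remainder_eq_zero β hi₀ hy hn, zero_mul]
  · rw [sum_orderedWeight, remainder_eq_zero β hi₀ hone.self_of_nhds (Nat.lt_succ_self n₀), sub_zero]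
  intro p hp
  obtain ⟨h₀, hperp, hreg⟩ := hΘreg n₀ x
  obtain ⟨j, hj⟩ : ∃ j, ∀ i ≤ n₀, inner ℝ (v (p, j)) (a i) = 0 := by
    have hfin : (⋃ i ∈ Finset.range (n₀ + 1), {j | inner ℝ (v (p, j)) (a i) ≠ 0}).Finite :=
      (Finset.range (n₀ + 1)).finite_toSet.biUnion fun i _ =>
        (ha i).preimage (Prod.mk_right_injective p).injOn
    obtain ⟨j, hj⟩ := hfin.infinite_compl.nonempty
    refine ⟨j, fun i hi => ?_⟩
    by_contra hne
    exact hj (mem_biUnion (Finset.mem_coe.2 (Finset.mem_range.2 (Nat.lt_succ_of_le hi))) hne)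
  have hkp : ∀ n, ∀ p < m, k n ≠ p := fun n p hp h => by have := hkm n; omega
  have hgh : ∀ p < m, inner ℝ (g p) h₀ = 0 := fun p hp =>
    hperp _ fun j => by rw [hg, if_neg (hkp n₀ p hp)]
  have hah : ∀ i ≤ n₀, inner ℝ (a i) h₀ = 0 := fun i hi => hperp _ fun j => hka n₀ i hi j
  have hortho : ∀ q q', q ≠ q' → inner ℝ (v q) (v q') = 0 := fun q q' hq => hv.2 hq
  have hΘv : ∀ n, fderiv ℝ (Θ n) x (v (p, j)) = 0 := fun n =>
    hΘrow n x _ fun j' => hortho _ _ fun h => hkp n p hp (Prod.ext_iff.1 h).1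
  have hΘh : ∀ n ≠ n₀, fderiv ℝ (Θ n) x h₀ = 0 := fun n hn =>
    hΘrow n x _ fun j' => hperp _ fun j'' =>
      hortho _ _ fun h => hn (hkinj (Prod.ext_iff.1 h).1).symm
  set h := v (p, j) - (2 * inner ℝ x (v (p, j))) • h₀ with hh
  -- exactly one of the two perturbations in `N n i` is `Θ n₀`, and `h₀` is invisible to the other
  have hNh : ∀ n, n = n₀ ∨ n + 1 = n₀ → ∀ i ≤ n, StationaryAlong x h (N n i) := by
    intro n hn i hi
    refine ⟨_, hNd n i x, ?_⟩
    have hsum : fderiv ℝ (Θ n) x h₀ + fderiv ℝ (Θ (n + 1)) x h₀ = 1 - 2 * inner ℝ x h₀ := by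
      rcases hn with rfl | rfl
      · rw [hΘh (n + 1) (by omega)]; linarith
      · rw [hΘh n (by omega)]; linarith
    have e1 := hah i (by omega)
    have e2 := hj i (by omega)
    rw [real_inner_comm] at e2
    simp [hh, hΘv, inner_sub_right, inner_smul_right, e1, e2]
    linear_combination (-2 * inner ℝ x (v (p, j))) * hsum
  have hβh : ∀ n ≤ n₀, ∀ i ≤ n, StationaryAlong x h (β n i) := by
    intro n hn i hi
    by_cases hcase : n = n₀ ∨ n + 1 = n₀
    · obtain ⟨N', hN', hN0⟩ := hNh n hcase i hi
      have hd := ((contDiff_cutoff (P n i) (Q n i)).differentiable (by simp) (N n i x)).hasDerivAt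
      exact ⟨_, hd.comp_hasFDerivAt x hN', by simp [hN0]⟩
    · have hzero : β n i x = 0 := by
        by_contra hne
        exact hmin (n + 1) (by omega) ⟨i, by omega, hstep n i hi x hne⟩
      refine ⟨_, ((hβcd n i).differentiable (by simp) x).hasFDerivAt, ?_⟩
      rw [IsLocalMin.fderiv_eq_zero (Filter.Eventually.of_forall fun y => by
        rw [hzero]; exact hβ0 n i y)]
      rfl
  refine ⟨h, fun n hn i hi => stationaryAlong_orderedWeight β hi fun l hl j hj =>
    hβh l (hl.trans hn) j hj, ?_, ?_⟩
  · rw [hh, inner_sub_right, inner_smul_right, hgh p hp, real_inner_comm, hg, if_pos rfl]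
    simp
  · intro p' hp' hne
    rw [hh, inner_sub_right, inner_smul_right, hgh p' hp', real_inner_comm, hg, if_neg hne.symm]
    simp

/-! ### The approximation -/

/-- A countable cover of `U` by balls centred in a dense set `V`, on each of which `f` is within `ε / 2`
of its value at the centre and `δ i • ℓ` is at most `ε / 2`. -/
theorem exists_adapted_cover {X E : Type*} [NormedAddCommGroup X] [NormedSpace ℝ X]
    [TopologicalSpace.SeparableSpace X] [NormedAddCommGroup E] [NormedSpace ℝ E]
    {U V : Set X} (hU : IsOpen U) (hne : U.Nonempty) (hV : Dense V)
    {f : X → E} (hf : ContinuousOn f U) {ε : X → ℝ} (hε : ContinuousOn ε U)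
    (hεpos : ∀ x ∈ U, 0 < ε x) (ℓ : X →L[ℝ] E) :
    ∃ (a : ℕ → X) (r δ : ℕ → ℝ), (∀ i, a i ∈ V) ∧ (∀ i, 0 < r i) ∧ (∀ i, 0 < δ i) ∧
      (∀ i, ∀ y ∈ ball (a i) (r i), ‖f y - f (a i)‖ ≤ ε y / 2 ∧ δ i * ‖ℓ y‖ ≤ ε y / 2) ∧
      ∀ x ∈ U, ∃ i, x ∈ ball (a i) (r i) := by
  have hloc : ∀ x : U, ∃ (a : X) (r δ : ℝ), a ∈ V ∧ 0 < r ∧ 0 < δ ∧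
      (∀ y ∈ ball a r, ‖f y - f a‖ ≤ ε y / 2 ∧ δ * ‖ℓ y‖ ≤ ε y / 2) ∧ (x : X) ∈ ball a r := by
    rintro ⟨x, hx⟩
    have he := hεpos x hx
    have h1 := (hε.continuousAt (hU.mem_nhds hx)).eventually_const_lt (half_lt_self he)
    have h2 := (hf.continuousAt (hU.mem_nhds hx)).eventually
      (ball_mem_nhds (f x) (by positivity : 0 < ε x / 8))
    obtain ⟨s, hs, hball⟩ := Metric.eventually_nhds_iff_ball.1 (h1.and h2)
    obtain ⟨a, haV, ha⟩ := hV.exists_mem_open (isOpen_ball (x := x) (ε := s / 2))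
      ⟨x, mem_ball_self (by positivity)⟩
    have hsub : ∀ y ∈ ball a (s / 2), y ∈ ball x s := fun y hy => by
      rw [mem_ball] at *
      linarith [dist_triangle y a x]
    have hM : 0 ≤ ‖ℓ‖ * (‖x‖ + s) := by positivity
    refine ⟨a, s / 2, ε x / (4 * (‖ℓ‖ * (‖x‖ + s) + 1)), haV, by positivity, by positivity,
      fun y hy => ?_, by rw [mem_ball_comm]; exact ha⟩
    obtain ⟨hy1, hy2⟩ := hball y (hsub y hy)
    obtain ⟨-, ha2⟩ := hball a (hsub a (mem_ball_self (by positivity)))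
    constructor
    · rw [← dist_eq_norm]
      linarith [dist_triangle_right (f y) (f a) (f x)]
    · have h3 : ‖y‖ ≤ ‖x‖ + s := by
        have := hsub y hy
        rw [mem_ball, dist_eq_norm] at this
        linarith [norm_le_norm_add_norm_sub' y x]
      have h4 : ‖ℓ y‖ ≤ ‖ℓ‖ * (‖x‖ + s) + 1 :=
        (ℓ.le_opNorm y).trans (by nlinarith [norm_nonneg ℓ])
      calc ε x / (4 * (‖ℓ‖ * (‖x‖ + s) + 1)) * ‖ℓ y‖
          ≤ ε x / (4 * (‖ℓ‖ * (‖x‖ + s) + 1)) * (‖ℓ‖ * (‖x‖ + s) + 1) := by gcongr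
        _ = ε x / 4 := by field_simp
        _ ≤ ε y / 2 := by linarith
  choose A R D hAV hR hD hprop hmem using hloc
  have := UniformSpace.secondCountable_of_separable X
  obtain ⟨T, hT, hTU⟩ := TopologicalSpace.isOpen_iUnion_countable
    (fun x : U => ball (A x) (R x)) (fun _ => isOpen_ball)
  have hcov : ∀ x ∈ U, ∃ t ∈ T, x ∈ ball (A t) (R t) := fun x hx => by
    have : x ∈ ⋃ t ∈ T, ball (A t) (R t) := by
      rw [hTU]; exact mem_iUnion.2 ⟨⟨x, hx⟩, hmem ⟨x, hx⟩⟩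
    simpa using this
  have hTne : T.Nonempty := by
    obtain ⟨x, hx⟩ := hne
    obtain ⟨t, ht, -⟩ := hcov x hx
    exact ⟨t, ht⟩
  obtain ⟨e, rfl⟩ := hT.exists_eq_range hTne
  refine ⟨fun i => A (e i), fun i => R (e i), fun i => D (e i), fun i => hAV _, fun i => hR _,
    fun i => hD _, fun i => hprop _, fun x hx => ?_⟩
  obtain ⟨_, ⟨i, rfl⟩, hi⟩ := hcov x hx
  exact ⟨i, hi⟩

/-- Every continuous mapping from an open subset `U` of a separable infinite-dimensional
real Hilbert space into `ℝ^m` can be uniformly approximated (with continuous positive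
error `ε`) by `C^∞` mappings with no critical points on `U`. -/
theorem uniform_approximation_by_smooth_maps_without_critical_points
    {X : Type*} [NormedAddCommGroup X] [InnerProductSpace ℝ X] [CompleteSpace X]
    [TopologicalSpace.SeparableSpace X] (hX : ¬ FiniteDimensional ℝ X)
    (m : ℕ) (U : Set X) (hU : IsOpen U)
    (f : X → EuclideanSpace ℝ (Fin m)) (hf : ContinuousOn f U)
    (ε : X → ℝ) (hε : ContinuousOn ε U) (hεpos : ∀ x ∈ U, 0 < ε x) :
    ∃ ψ : X → EuclideanSpace ℝ (Fin m),
      ContDiffOn ℝ (⊤ : ℕ∞) ψ U ∧ (∀ x ∈ U, ‖f x - ψ x‖ ≤ ε x) ∧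
      (∀ x ∈ U, Function.Surjective (fderiv ℝ ψ x)) := by
  rcases U.eq_empty_or_nonempty with rfl | hne
  · exact ⟨f, contDiffOn_empty, by simp, by simp⟩
  obtain ⟨v, hv, hdense⟩ := exists_double_basis hX
  obtain ⟨g, hg⟩ := exists_row_vectors v hv
  set ℓ : X →L[ℝ] EuclideanSpace ℝ (Fin m) :=
    ((EuclideanSpace.equiv (Fin m) ℝ).symm : (Fin m → ℝ) →L[ℝ] EuclideanSpace ℝ (Fin m)).comp
      (ContinuousLinearMap.pi fun p : Fin m => innerSL ℝ (g p)) with hℓ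
  have hℓp : ∀ x p, (ℓ x) p = inner ℝ (g p) x := fun x p => rfl
  obtain ⟨a, r, δ, ha, hr, hδ, hprop, hcov⟩ :=
    exists_adapted_cover hU hne hdense hf hε hεpos ℓ
  obtain ⟨W, hWcd, hW0, hWsupp, hW⟩ := exists_weights v hv g hg m a ha r hr
  set F : ℕ → X → EuclideanSpace ℝ (Fin m) := fun n x =>
    ∑ i ∈ Finset.range (n + 1), W n i x • (f (a i) + δ i • ℓ x) with hF
  have hFcd : ∀ n, ContDiff ℝ ∞ (F n) := fun n => ContDiff.sum fun i _ =>
    (hWcd n i).smul (contDiff_const.add (δ i • ℓ).contDiff)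
  have hfin : ∀ n₀ x, (∀ n > n₀, ∀ i, W n i x = 0) →
      ∑' n, F n x = ∑ n ∈ Finset.range (n₀ + 1), F n x := by
    intro n₀ x h
    refine tsum_eq_sum fun n hn => Finset.sum_eq_zero fun i _ => ?_
    rw [h n (by simpa using hn), zero_smul]
  refine ⟨fun x => ∑' n, F n x, fun x hx => ?_, fun x hx => ?_, fun x hx => ?_⟩
  · obtain ⟨i, hi⟩ := hcov x hx
    obtain ⟨n₀, hev, -, -⟩ := hW i x hi
    refine ContDiffAt.contDiffWithinAt (ContDiffAt.congr_of_eventuallyEq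
      (ContDiff.sum fun n _ => hFcd n).contDiffAt (hev.mono fun y hy => hfin n₀ y hy))
  · obtain ⟨i, hi⟩ := hcov x hx
    obtain ⟨n₀, hev, hsum, -⟩ := hW i x hi
    have hterm : ∀ n, ∀ i ≤ n,
        ‖W n i x • f x - W n i x • (f (a i) + δ i • ℓ x)‖ ≤ W n i x * ε x := by
      intro n i hi
      by_cases h0 : W n i x = 0
      · simp [h0]
      obtain ⟨h1, h2⟩ := hprop i x (hWsupp n i hi x h0)
      rw [← smul_sub, norm_smul, Real.norm_of_nonneg (hW0 n i x)]
      refine mul_le_mul_of_nonneg_left ?_ (hW0 n i x)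
      rw [← sub_sub]
      refine (norm_sub_le _ _).trans ?_
      rw [norm_smul, Real.norm_of_nonneg (hδ i).le]
      linarith
    change ‖f x - ∑' n, F n x‖ ≤ ε x
    rw [hfin n₀ x hev.self_of_nhds]
    have e1 : f x = ∑ n ∈ Finset.range (n₀ + 1), ∑ i ∈ Finset.range (n + 1), W n i x • f x := by
      simp only [← Finset.sum_smul]
      rw [hsum, one_smul]
    have e2 : ε x = ∑ n ∈ Finset.range (n₀ + 1), ∑ i ∈ Finset.range (n + 1), W n i x * ε x := by
      simp only [← Finset.sum_mul]
      rw [hsum, one_mul]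
    rw [e2, e1]
    simp only [hF]
    rw [← Finset.sum_sub_distrib]
    refine norm_sum_le_of_le _ fun n _ => ?_
    rw [← Finset.sum_sub_distrib]
    refine norm_sum_le_of_le _ fun i hi => ?_
    exact hterm n i (Nat.lt_succ_iff.1 (Finset.mem_range.1 hi))
  · obtain ⟨i, hi⟩ := hcov x hx
    obtain ⟨n₀, hev, hsum, hdir⟩ := hW i x hi
    set D : ℝ := ∑ n ∈ Finset.range (n₀ + 1), ∑ i ∈ Finset.range (n + 1), W n i x * δ i with hD
    have hD0 : D ≠ 0 := by
      intro h0
      rw [hD, Finset.sum_eq_zero_iff_of_nonneg fun n _ => Finset.sum_nonneg fun i _ =>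
        mul_nonneg (hW0 n i x) (hδ i).le] at h0
      have : ∑ n ∈ Finset.range (n₀ + 1), ∑ i ∈ Finset.range (n + 1), W n i x = 0 := by
        refine Finset.sum_eq_zero fun n hn => Finset.sum_eq_zero fun i hi => ?_
        have h1 := (Finset.sum_eq_zero_iff_of_nonneg fun i _ =>
          mul_nonneg (hW0 n i x) (hδ i).le).1 (h0 n hn) i hi
        exact (mul_eq_zero.1 h1).resolve_right (hδ i).ne'
      rw [this] at hsum
      exact zero_ne_one hsum
    have hd : HasFDerivAt (fun x => ∑' n, F n x)
        (∑ n ∈ Finset.range (n₀ + 1), ∑ i ∈ Finset.range (n + 1),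
          (W n i x • δ i • ℓ + (fderiv ℝ (W n i) x).smulRight (f (a i) + δ i • ℓ x))) x := by
      refine HasFDerivAt.congr_of_eventuallyEq ?_ (hev.mono fun y hy => hfin n₀ y hy)
      refine HasFDerivAt.fun_sum fun n _ => HasFDerivAt.fun_sum fun i _ => ?_
      exact (((hWcd n i).differentiable (by simp) x).hasFDerivAt).smul
        ((ℓ.hasFDerivAt.const_smul (δ i)).const_add (f (a i)))
    have hdirD : ∀ h, (∀ n ≤ n₀, ∀ i ≤ n, StationaryAlong x h (W n i)) →
        fderiv ℝ (fun x => ∑' n, F n x) x h = D • ℓ h := by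
      intro h hst
      rw [hd.fderiv, hD]
      simp only [Finset.sum_smul, sum_apply]
      refine Finset.sum_congr rfl fun n hn => Finset.sum_congr rfl fun i hi => ?_
      obtain ⟨W', hW', h0⟩ := hst n (Nat.lt_succ_iff.1 (Finset.mem_range.1 hn)) i
        (Nat.lt_succ_iff.1 (Finset.mem_range.1 hi))
      rw [← hW'.fderiv] at h0
      simp [h0, smul_smul]
    have hbasis : ∀ p : Fin m, ∃ h, fderiv ℝ (fun x => ∑' n, F n x) x h =
        EuclideanSpace.single p (1 : ℝ) := by
      intro p
      obtain ⟨h, hst, hp, hp'⟩ := hdir p p.2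
      refine ⟨(D * inner ℝ (g p) h)⁻¹ • h, ?_⟩
      rw [map_smul, hdirD h hst, smul_smul]
      ext q
      rw [PiLp.smul_apply, hℓp]
      by_cases hq : q = p
      · subst hq
        simp
        field_simp
      · rw [hp' q q.2 fun h => hq (Fin.ext h)]
        simp [hq]
    choose h hh using hbasis
    intro y
    refine ⟨∑ p, y p • h p, ?_⟩
    rw [map_sum]
    simp only [map_smul, hh]
    ext q
    simp [Pi.single_apply]
end

section
/- Let U be an open subset of a separable infinite-dimensional real Hilbert space X, let f : U → ℝ^m be a continuous mapping, and let ε : U → (0,∞) be a continuous positive function. Then there exists a C^∞ smooth mapping φ : U → ℝ^m such that: (a) the set C_φ of critical points of φ is locally compact and closed relative to U; and (b) ‖φ(x) − f(x)‖ ≤ ε(x)/2 for all x ∈ U. -/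
/-!
Choose a countable cover of `U` by balls `B(cₙ, ρₙ)` such that `f` and `ε` are almost constant on
`B(cₙ, 2ρₙ) ⊆ U`.  Let `hₙ` be a smooth function of `‖x - cₙ‖²` that equals `1` on `B(cₙ, ρₙ)` and
vanishes off `B(cₙ, 2ρₙ)`; then `ψₙ = hₙ ∏_{j<n} (1 - hⱼ)` is a partition of unity on `U`, and all
`ψₙ` with `n > N` vanish on `B(c_N, ρ_N)`.  Its point is that `∇ψₙ(x) ∈ span {x, c₀, …, cₙ}`.

The span `E` of all centres has countable Hamel dimension, so by Baire's theorem `X ⧸ E` is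
infinite-dimensional, and there is a linear `A : ℝᵐ → X` with `A v ∈ E` only for `v = 0`
(`exists_linear_independent_mod_span`).  Put `T = A*` and
`φ(x) = ∑ ψₙ(x) (f(cₙ) + δₙ T x)` with small `δₙ > 0`.

Fix `N`, write `V = span {c₀, …, c_N}` and let `x ∈ U ∩ B(c_N, ρ_N)`.  On directions `w` orthogonal
to `V` and `x` all `dψₙ(x)` vanish, so `dφ(x) w = η(x) T w` with `η(x) = ∑ ψₙ(x) δₙ > 0`.  If
`dφ(x)` is not surjective, some `v ≠ 0` is orthogonal to all these values, hence
`A v ∈ V + ℝ x`, say `A v = u + t x`; here `t ≠ 0` because `A v ∉ E`, so `x ∈ V + A(ℝᵐ)`.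
Thus the critical set, which is relatively closed because surjectivity is an open condition, is
locally contained in finite-dimensional subspaces, and therefore is locally compact.
-/

open Metric Set
open Filter Topology

set_option linter.unusedSectionVars false

namespace SmoothApprox

/-! ### Linear algebra and Baire category -/

section Linear

variable {X : Type*} [NormedAddCommGroup X] [InnerProductSpace ℝ X]

theorem span_countable_ne_top [CompleteSpace X] (hX : ¬ FiniteDimensional ℝ X)
    {S : Set X} (hS : S.Countable) : Submodule.span ℝ S ≠ ⊤ := by
  classical
  intro htop
  have : Countable S := hS.to_subtype
  -- `X` would be the union of the countably many closed subspaces spanned by finite subsets of `S`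
  let F : Finset S → Submodule ℝ X := fun t =>
    Submodule.span ℝ ((fun y : S => (y : X)) '' (t : Set S))
  have hfd : ∀ t, FiniteDimensional ℝ (F t) := fun t =>
    FiniteDimensional.span_of_finite ℝ (t.finite_toSet.image _)
  have hclosed : ∀ t, IsClosed (F t : Set X) := fun t => by
    have := hfd t
    exact Submodule.closed_of_finiteDimensional _
  have hunion : ⋃ t, (F t : Set X) = univ := by
    refine eq_univ_of_forall fun x => ?_
    have hx : x ∈ Submodule.span ℝ S := htop ▸ Submodule.mem_top
    obtain ⟨T, hT, hxT⟩ := Submodule.mem_span_finite_of_mem_span hx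
    refine mem_iUnion.2 ⟨T.subtype (· ∈ S), ?_⟩
    refine Submodule.span_mono (fun y hy => ?_) hxT
    exact ⟨⟨y, hT hy⟩, by simpa using hy, rfl⟩
  obtain ⟨t, ht⟩ := nonempty_interior_of_iUnion_of_closed hclosed hunion
  have h1 : F t = ⊤ := Submodule.eq_top_of_nonempty_interior' _ ht
  have := hfd t
  rw [h1] at this
  exact hX (Module.finite_def.2 (Module.Finite.iff_fg.1 this))

theorem exists_linear_independent_mod_span [CompleteSpace X] (hX : ¬ FiniteDimensional ℝ X)
    {S : Set X} (hS : S.Countable) (m : ℕ) :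
    ∃ A : EuclideanSpace ℝ (Fin m) →L[ℝ] X, ∀ v, A v ∈ Submodule.span ℝ S → v = 0 := by
  set E := Submodule.span ℝ S with hE
  have hinf : ¬ FiniteDimensional ℝ (X ⧸ E) := by
    intro hfin
    obtain ⟨q, hq⟩ := E.exists_isCompl
    have hqfd : FiniteDimensional ℝ q := (E.quotientEquivOfIsCompl q hq).finiteDimensional
    obtain ⟨t, ht⟩ := Module.Finite.iff_fg.1 hqfd
    refine span_countable_ne_top hX (hS.union t.countable_toSet) ?_
    rw [Submodule.span_union, ht, ← hE, hq.sup_eq_top]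
  have hrank : (m : Cardinal) ≤ Module.rank ℝ (X ⧸ E) := by
    by_contra h
    exact hinf (Module.rank_lt_aleph0_iff.1
      ((not_le.1 h).trans (Cardinal.natCast_lt_aleph0)))
  obtain ⟨b, hb⟩ := exists_linearIndependent_of_le_rank hrank
  obtain ⟨g, hg⟩ := E.mkQ.exists_rightInverse_of_surjective (Submodule.range_mkQ E)
  let B : EuclideanSpace ℝ (Fin m) →ₗ[ℝ] (X ⧸ E) :=
    (Fintype.linearCombination ℝ b).comp
      (EuclideanSpace.equiv (Fin m) ℝ).toLinearEquiv.toLinearMap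
  refine ⟨LinearMap.toContinuousLinearMap (g.comp B), fun v hv => ?_⟩
  have h1 : E.mkQ (g (B v)) = 0 := (Submodule.Quotient.mk_eq_zero E).2 hv
  have h2 : B v = 0 := by
    have := LinearMap.congr_fun hg (B v)
    simpa [h1] using this.symm
  have h3 := Fintype.linearIndependent_iff.1 hb (fun i => v i)
    (by simpa [B, Fintype.linearCombination_apply] using h2)
  ext i
  exact h3 i

theorem isOpen_surjective {Y : Type*} [NormedAddCommGroup Y] [InnerProductSpace ℝ Y]
    [FiniteDimensional ℝ Y] : IsOpen {L : X →L[ℝ] Y | Function.Surjective L} := by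
  have : CompleteSpace Y := FiniteDimensional.complete ℝ Y
  refine isOpen_iff_mem_nhds.2 fun L hL => ?_
  obtain ⟨g, hg⟩ := (L : X →ₗ[ℝ] Y).exists_rightInverse_of_surjective (LinearMap.range_eq_top.2 hL)
  let R : Y →L[ℝ] X := LinearMap.toContinuousLinearMap g
  have hcont : Continuous fun M : X →L[ℝ] Y => M.comp R := by fun_prop
  have hopen : IsOpen {M : X →L[ℝ] Y | IsUnit (M.comp R)} :=
    (Units.isOpen (R := Y →L[ℝ] Y)).preimage hcont
  have hmem : IsUnit (L.comp R) := by
    have : L.comp R = 1 := by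
      ext y
      exact LinearMap.congr_fun hg y
    rw [this]
    exact isUnit_one
  refine mem_of_superset (hopen.mem_nhds hmem) fun M hM y => ?_
  obtain ⟨u, hu⟩ := hM
  refine ⟨R ((↑u⁻¹ : Y →L[ℝ] Y) y), ?_⟩
  have h : (u : Y →L[ℝ] Y) * (↑u⁻¹ : Y →L[ℝ] Y) = 1 := u.mul_inv
  have h' := DFunLike.congr_fun h y
  rw [hu] at h'
  exact h'

/-- If `A` is injective modulo a finite-dimensional `V` and `x` lies outside `V + range A`, then
`A` is injective modulo `V + ℝ x`; dually, `A*` maps the orthogonal complement of `V + ℝ x` onto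
the whole space. -/
theorem adjoint_surjOn_orthogonal [CompleteSpace X] {Y : Type*} [NormedAddCommGroup Y]
    [InnerProductSpace ℝ Y] [FiniteDimensional ℝ Y] [CompleteSpace Y]
    (A : Y →L[ℝ] X) (V : Submodule ℝ X) [FiniteDimensional ℝ V] (hA : ∀ v, A v ∈ V → v = 0)
    (x : X) (hx : x ∉ V ⊔ LinearMap.range (A : Y →ₗ[ℝ] X)) (y : Y) :
    ∃ w ∈ (V ⊔ Submodule.span ℝ {x})ᗮ, ContinuousLinearMap.adjoint A w = y := by
  set S := V ⊔ Submodule.span ℝ {x}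
  have hS : FiniteDimensional ℝ S := inferInstance
  set R := Sᗮ.map (ContinuousLinearMap.adjoint A : X →ₗ[ℝ] Y) with hR
  have htop : R = ⊤ := by
    rw [← Submodule.orthogonal_eq_bot_iff, Submodule.eq_bot_iff]
    intro v hv
    have hAv : A v ∈ S := by
      rw [← Submodule.orthogonal_orthogonal S, Submodule.mem_orthogonal']
      intro w hw
      rw [← ContinuousLinearMap.adjoint_inner_right]
      exact (Submodule.mem_orthogonal' _ _).1 hv _ (Submodule.mem_map_of_mem hw)
    obtain ⟨u, hu, z, hz, huz⟩ := Submodule.mem_sup.1 hAv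
    obtain ⟨t, rfl⟩ := Submodule.mem_span_singleton.1 hz
    by_cases ht : t = 0
    · refine hA v ?_
      rw [← huz, ht, zero_smul, add_zero]
      exact hu
    · refine absurd ?_ hx
      have hxe : x = t⁻¹ • (-u + A v) := by
        rw [← huz, neg_add_cancel_left, smul_smul, inv_mul_cancel₀ ht, one_smul]
      rw [hxe]
      exact Submodule.smul_mem _ _ (add_mem (Submodule.mem_sup_left (neg_mem hu))
        (Submodule.mem_sup_right ⟨v, rfl⟩))
  have hy : y ∈ R := htop ▸ Submodule.mem_top
  obtain ⟨w, hw, rfl⟩ := hy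
  exact ⟨w, hw, rfl⟩

end Linear

/-! ### Partition of unity -/

section Partition

variable {X : Type*} [NormedAddCommGroup X] [InnerProductSpace ℝ X]

/-- Smooth function of `‖x - c‖²`, equal to `1` for `‖x - c‖ ≤ r` and to `0` for
`‖x - c‖ ≥ √2 r`. -/
noncomputable def bump (c : X) (r : ℝ) (x : X) : ℝ :=
  Real.smoothTransition (2 - ‖x - c‖ ^ 2 / r ^ 2)

theorem bump_nonneg (c : X) (r : ℝ) (x : X) : 0 ≤ bump c r x := Real.smoothTransition.nonneg _

theorem bump_le_one (c : X) (r : ℝ) (x : X) : bump c r x ≤ 1 := Real.smoothTransition.le_one _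

theorem bump_eq_one {c : X} {r : ℝ} (hr : 0 < r) {x : X} (hx : x ∈ ball c r) :
    bump c r x = 1 := by
  refine Real.smoothTransition.one_of_one_le ?_
  rw [mem_ball_iff_norm] at hx
  have : ‖x - c‖ ^ 2 / r ^ 2 ≤ 1 := by
    rw [div_le_one (by positivity)]
    gcongr
  linarith

theorem mem_ball_of_bump_ne_zero {c : X} {r : ℝ} (hr : 0 < r) {x : X} (hx : bump c r x ≠ 0) :
    x ∈ ball c (2 * r) := by
  by_contra h
  rw [mem_ball_iff_norm, not_lt] at h
  refine hx (Real.smoothTransition.zero_of_nonpos ?_)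
  have : 2 ≤ ‖x - c‖ ^ 2 / r ^ 2 := by
    rw [le_div_iff₀ (by positivity)]
    have : (2 * r) ^ 2 ≤ ‖x - c‖ ^ 2 := by gcongr
    nlinarith [sq_nonneg r]
  linarith

theorem contDiff_bump (c : X) (r : ℝ) : ContDiff ℝ (⊤ : ℕ∞) (bump c r) := by
  refine Real.smoothTransition.contDiff.comp ?_
  exact contDiff_const.sub (((contDiff_id.sub contDiff_const).norm_sq ℝ).div_const _)

theorem differentiable_bump (c : X) (r : ℝ) : Differentiable ℝ (bump c r) :=
  (contDiff_bump c r).differentiable (by simp)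

theorem fderiv_bump_apply_eq_zero {c x w : X} (r : ℝ) (hc : inner ℝ c w = 0)
    (hx : inner ℝ x w = 0) : fderiv ℝ (bump c r) x w = 0 := by
  have h1 : HasFDerivAt (fun y : X => 2 - ‖y - c‖ ^ 2 / r ^ 2) _ x :=
    ((((hasFDerivAt_id x).sub_const c).norm_sq).mul_const ((r ^ 2)⁻¹)).const_sub 2
  have h2 : HasDerivAt Real.smoothTransition _ (2 - ‖x - c‖ ^ 2 / r ^ 2) :=
    ((Real.smoothTransition.contDiff (n := ⊤)).differentiable (by simp)
      (2 - ‖x - c‖ ^ 2 / r ^ 2)).hasDerivAt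
  have h3 : HasFDerivAt (bump c r) _ x := h2.comp_hasFDerivAt x h1
  rw [h3.fderiv]
  simp [hc, hx]

/-- The partition of unity `ψₙ = hₙ ∏_{j<n} (1 - hⱼ)`, with `hₙ` the bump around `c n`. -/
noncomputable def pou (c : ℕ → X) (r : ℕ → ℝ) (n : ℕ) (x : X) : ℝ :=
  bump (c n) (r n) x * ∏ j ∈ Finset.range n, (1 - bump (c j) (r j) x)

variable (c : ℕ → X) (r : ℕ → ℝ)

theorem pou_nonneg (n : ℕ) (x : X) : 0 ≤ pou c r n x :=
  mul_nonneg (bump_nonneg _ _ _)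
    (Finset.prod_nonneg fun _ _ => sub_nonneg.2 (bump_le_one _ _ _))

theorem sum_pou (N : ℕ) (x : X) : ∑ n ∈ Finset.range N, pou c r n x =
    1 - ∏ j ∈ Finset.range N, (1 - bump (c j) (r j) x) := by
  induction N with
  | zero => simp
  | succ N ih =>
    rw [Finset.sum_range_succ, ih, Finset.prod_range_succ, pou]
    ring

theorem sum_pou_eq_one {N : ℕ} (hr : 0 < r N) {x : X} (hx : x ∈ ball (c N) (r N)) :
    ∑ n ∈ Finset.range (N + 1), pou c r n x = 1 := by
  rw [sum_pou, Finset.prod_range_succ, bump_eq_one hr hx]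
  ring

theorem pou_eq_zero {N n : ℕ} (hr : 0 < r N) {x : X} (hx : x ∈ ball (c N) (r N)) (hn : N < n) :
    pou c r n x = 0 := by
  rw [pou, Finset.prod_eq_zero (Finset.mem_range.2 hn), mul_zero]
  rw [bump_eq_one hr hx, sub_self]

theorem contDiff_pou (n : ℕ) : ContDiff ℝ (⊤ : ℕ∞) (pou c r n) :=
  (contDiff_bump _ _).mul (contDiff_prod fun _ _ => contDiff_const.sub (contDiff_bump _ _))

theorem fderiv_prod_apply_eq_zero {x w : X} (n : ℕ) (hc : ∀ j < n, inner ℝ (c j) w = 0)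
    (hx : inner ℝ x w = 0) :
    fderiv ℝ (fun y => ∏ j ∈ Finset.range n, (1 - bump (c j) (r j) y)) x w = 0 := by
  induction n with
  | zero => simp
  | succ n ih =>
    have hd : Differentiable ℝ fun y => ∏ j ∈ Finset.range n, (1 - bump (c j) (r j) y) :=
      (contDiff_prod fun _ _ => contDiff_const.sub (contDiff_bump _ _) :
        ContDiff ℝ (⊤ : ℕ∞) _).differentiable (by simp)
    simp_rw [Finset.prod_range_succ]
    rw [fderiv_fun_mul (hd x) ((differentiable_bump _ _ x).const_sub 1), fderiv_const_sub]
    simp [ih fun j hj => hc j (hj.trans n.lt_succ_self),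
      fderiv_bump_apply_eq_zero (r n) (hc n n.lt_succ_self) hx]

theorem fderiv_pou_apply_eq_zero {x w : X} (n : ℕ) (hc : ∀ j ≤ n, inner ℝ (c j) w = 0)
    (hx : inner ℝ x w = 0) : fderiv ℝ (pou c r n) x w = 0 := by
  have hd : Differentiable ℝ fun y => ∏ j ∈ Finset.range n, (1 - bump (c j) (r j) y) :=
    (contDiff_prod fun _ _ => contDiff_const.sub (contDiff_bump _ _) :
      ContDiff ℝ (⊤ : ℕ∞) _).differentiable (by simp)
  have : pou c r n = fun y => bump (c n) (r n) y *
    ∏ j ∈ Finset.range n, (1 - bump (c j) (r j) y) := rfl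
  rw [this, fderiv_fun_mul (differentiable_bump _ _ x) (hd x)]
  simp [fderiv_prod_apply_eq_zero c r n (fun j hj => hc j hj.le) hx,
    fderiv_bump_apply_eq_zero (r n) (hc n le_rfl) hx]

end Partition

/-! ### The approximation -/

section Approximation

variable {X : Type*} [NormedAddCommGroup X] [InnerProductSpace ℝ X]
  {Y : Type*} [NormedAddCommGroup Y] [InnerProductSpace ℝ Y]
  (c : ℕ → X) (r δ : ℕ → ℝ) (a : ℕ → Y) (T : X →L[ℝ] Y)

/-- `∑ₙ ψₙ(x) (aₙ + δₙ T x)`.  At points covered by the balls `B(c n, r n)` only finitely many terms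
are nonzero; elsewhere the value is irrelevant. -/
noncomputable def approx (x : X) : Y := ∑' n, pou c r n x • (a n + δ n • T x)

theorem approx_eq_sum {N : ℕ} (hr : 0 < r N) {x : X} (hx : x ∈ ball (c N) (r N)) :
    approx c r δ a T x = ∑ n ∈ Finset.range (N + 1), pou c r n x • (a n + δ n • T x) := by
  refine tsum_eq_sum fun n hn => ?_
  rw [Finset.mem_range, not_lt] at hn
  rw [pou_eq_zero c r hr hx hn, zero_smul]

theorem approx_eventuallyEq {N : ℕ} (hr : 0 < r N) {x : X} (hx : x ∈ ball (c N) (r N)) :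
    approx c r δ a T =ᶠ[𝓝 x]
      fun y => ∑ n ∈ Finset.range (N + 1), pou c r n y • (a n + δ n • T y) := by
  filter_upwards [isOpen_ball.mem_nhds hx] with y hy using approx_eq_sum c r δ a T hr hy

theorem contDiffAt_approx {N : ℕ} (hr : 0 < r N) {x : X} (hx : x ∈ ball (c N) (r N)) :
    ContDiffAt ℝ (⊤ : ℕ∞) (approx c r δ a T) x := by
  refine ContDiffAt.congr_of_eventuallyEq ?_ (approx_eventuallyEq c r δ a T hr hx)
  refine ContDiff.contDiffAt (ContDiff.sum fun n _ => ?_)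
  exact (contDiff_pou c r n).smul (contDiff_const.add (T.contDiff.const_smul _))

theorem fderiv_approx_apply {N : ℕ} (hr : 0 < r N) {x w : X} (hx : x ∈ ball (c N) (r N))
    (hc : ∀ j ≤ N, inner ℝ (c j) w = 0) (hxw : inner ℝ x w = 0) :
    fderiv ℝ (approx c r δ a T) x w =
      (∑ n ∈ Finset.range (N + 1), pou c r n x * δ n) • T w := by
  rw [(approx_eventuallyEq c r δ a T hr hx).fderiv_eq]
  have hterm : ∀ n ∈ Finset.range (N + 1), HasFDerivAt
      (fun y => pou c r n y • (a n + δ n • T y))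
      (pou c r n x • (δ n • T) + (fderiv ℝ (pou c r n) x).smulRight (a n + δ n • T x)) x := by
    intro n _
    have h1 : HasFDerivAt (pou c r n) (fderiv ℝ (pou c r n) x) x :=
      ((contDiff_pou c r n).differentiable (by simp) x).hasFDerivAt
    exact h1.smul ((T.hasFDerivAt.const_smul (δ n)).const_add (a n))
  rw [(HasFDerivAt.fun_sum hterm).fderiv, sum_apply, Finset.sum_smul]
  refine Finset.sum_congr rfl fun n hn => ?_
  have hn' : n ≤ N := Nat.lt_succ_iff.1 (Finset.mem_range.1 hn)
  simp [fderiv_pou_apply_eq_zero c r n (fun j hj => hc j (hj.trans hn')) hxw, mul_smul]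

theorem sum_pou_mul_pos {N : ℕ} (hr : 0 < r N) (hδ : ∀ n, 0 < δ n) {x : X}
    (hx : x ∈ ball (c N) (r N)) : 0 < ∑ n ∈ Finset.range (N + 1), pou c r n x * δ n := by
  have h0 : ∀ n ∈ Finset.range (N + 1), 0 ≤ pou c r n x * δ n := fun n _ =>
    mul_nonneg (pou_nonneg c r n x) (hδ n).le
  refine (Finset.sum_nonneg h0).lt_of_ne fun h => ?_
  have h1 := (Finset.sum_eq_zero_iff_of_nonneg h0).1 h.symm
  have h2 : ∑ n ∈ Finset.range (N + 1), pou c r n x = 0 := Finset.sum_eq_zero fun n hn =>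
    (mul_eq_zero.1 (h1 n hn)).resolve_right (hδ n).ne'
  rw [sum_pou_eq_one c r hr hx] at h2
  exact one_ne_zero h2

/-- Critical points of the approximation in the ball `B(c N, r N)` lie in a finite-dimensional
subspace depending only on `N`. -/
theorem mem_of_not_surjective [CompleteSpace X] [FiniteDimensional ℝ Y] [CompleteSpace Y]
    (A : Y →L[ℝ] X) (hA : ∀ v, A v ∈ Submodule.span ℝ (range c) → v = 0)
    {N : ℕ} (hr : 0 < r N) (hδ : ∀ n, 0 < δ n) {x : X} (hx : x ∈ ball (c N) (r N))
    (hcrit : ¬ Function.Surjective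
      (fderiv ℝ (approx c r δ a (ContinuousLinearMap.adjoint A)) x)) :
    x ∈ Submodule.span ℝ (c '' Iic N) ⊔ LinearMap.range (A : Y →ₗ[ℝ] X) := by
  by_contra hxW
  have : FiniteDimensional ℝ (Submodule.span ℝ (c '' Iic N)) :=
    FiniteDimensional.span_of_finite ℝ ((finite_Iic N).image c)
  refine hcrit fun y => ?_
  have hη := sum_pou_mul_pos c r δ hr hδ hx
  set η := ∑ n ∈ Finset.range (N + 1), pou c r n x * δ n with hηdef
  obtain ⟨w, hw, hwy⟩ := adjoint_surjOn_orthogonal A (Submodule.span ℝ (c '' Iic N))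
    (fun v hv => hA v (Submodule.span_mono (image_subset_range _ _) hv)) x hxW (η⁻¹ • y)
  refine ⟨w, ?_⟩
  rw [Submodule.mem_orthogonal] at hw
  rw [fderiv_approx_apply c r δ a _ hr hx
    (fun j hj => hw _ (Submodule.mem_sup_left (Submodule.subset_span ⟨j, hj, rfl⟩)))
    (hw _ (Submodule.mem_sup_right (Submodule.mem_span_singleton_self x))), hwy, ← hηdef,
    smul_smul, mul_inv_cancel₀ hη.ne', one_smul]

theorem norm_approx_sub_le {N : ℕ} (hr : ∀ n, 0 < r n) {x : X} (hx : x ∈ ball (c N) (r N))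
    (y : Y) (e : ℝ)
    (h : ∀ n, x ∈ ball (c n) (2 * r n) → ‖a n + δ n • T x - y‖ ≤ e) :
    ‖approx c r δ a T x - y‖ ≤ e := by
  have h1 := sum_pou_eq_one c r (hr N) hx
  have h2 : approx c r δ a T x - y =
      ∑ n ∈ Finset.range (N + 1), pou c r n x • (a n + δ n • T x - y) := by
    simp_rw [smul_sub]
    rw [Finset.sum_sub_distrib, ← Finset.sum_smul, h1, one_smul,
      approx_eq_sum c r δ a T (hr N) hx]
  calc ‖approx c r δ a T x - y‖
      ≤ ∑ n ∈ Finset.range (N + 1), ‖pou c r n x • (a n + δ n • T x - y)‖ := by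
        rw [h2]
        exact norm_sum_le _ _
    _ ≤ ∑ n ∈ Finset.range (N + 1), pou c r n x * e := by
        refine Finset.sum_le_sum fun n _ => ?_
        rw [norm_smul, Real.norm_of_nonneg (pou_nonneg c r n x)]
        by_cases h0 : bump (c n) (r n) x = 0
        · simp [pou, h0]
        · exact mul_le_mul_of_nonneg_left (h n (mem_ball_of_bump_ne_zero (hr n) h0))
            (pou_nonneg c r n x)
    _ = e := by rw [← Finset.sum_mul, h1, one_mul]

end Approximation

/-- Countable cover of `U` by balls on whose doubles `f` and `ε` hardly vary. -/
theorem exists_cover {X Y : Type*} [NormedAddCommGroup X] [TopologicalSpace.SeparableSpace X]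
    [NormedAddCommGroup Y] {U : Set X} (hU : IsOpen U) (hne : U.Nonempty)
    {f : X → Y} (hf : ContinuousOn f U) {ε : X → ℝ} (hε : ContinuousOn ε U)
    (hεpos : ∀ x ∈ U, 0 < ε x) :
    ∃ (c : ℕ → X) (r : ℕ → ℝ), (∀ n, c n ∈ U) ∧ (∀ n, 0 < r n) ∧
      (∀ x ∈ U, ∃ n, x ∈ ball (c n) (r n)) ∧
      ∀ n, ∀ x ∈ ball (c n) (2 * r n),
        ‖f (c n) - f x‖ ≤ ε (c n) / 8 ∧ ε (c n) / 2 ≤ ε x := by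
  have hloc : ∀ x ∈ U, ∃ ρ > 0, ∀ y ∈ ball x (2 * ρ), ‖f x - f y‖ ≤ ε x / 8 ∧ ε x / 2 ≤ ε y := by
    intro x hx
    have hx0 := hεpos x hx
    have h1 : ∀ᶠ y in 𝓝 x, dist (f y) (f x) < ε x / 8 :=
      Metric.tendsto_nhds.1 (hf.continuousAt (hU.mem_nhds hx)) _ (by positivity)
    have h2 : ∀ᶠ y in 𝓝 x, ε x / 2 < ε y :=
      (hε.continuousAt (hU.mem_nhds hx)).eventually (lt_mem_nhds (by linarith))
    obtain ⟨s, hs, hball⟩ := Metric.eventually_nhds_iff_ball.1 (h1.and h2)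
    refine ⟨s / 2, by positivity, fun y hy => ?_⟩
    rw [mul_div_cancel₀ _ two_ne_zero] at hy
    obtain ⟨h3, h4⟩ := hball y hy
    rw [dist_comm, dist_eq_norm] at h3
    exact ⟨h3.le, h4.le⟩
  choose! ρ hρ hρ' using hloc
  have : SecondCountableTopology X := UniformSpace.secondCountable_of_separable X
  obtain ⟨t, htU, htc, hcov⟩ := TopologicalSpace.countable_cover_nhdsWithin
    (f := fun x => ball x (ρ x)) (s := U)
    fun x hx => mem_nhdsWithin_of_mem_nhds (ball_mem_nhds x (hρ x hx))
  have htne : t.Nonempty := by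
    obtain ⟨x, hx⟩ := hne
    obtain ⟨y, hy, -⟩ := mem_iUnion₂.1 (hcov hx)
    exact ⟨y, hy⟩
  obtain ⟨c, rfl⟩ := htc.exists_eq_range htne
  have hcU : ∀ n, c n ∈ U := fun n => htU ⟨n, rfl⟩
  refine ⟨c, fun n => ρ (c n), hcU, fun n => hρ _ (hcU n), fun x hx => ?_,
    fun n => hρ' _ (hcU n)⟩
  simpa using hcov hx

end SmoothApprox

open SmoothApprox in
/-- Every continuous map from an open subset `U` of a separable infinite-dimensional real
Hilbert space into `ℝ^m` can be `ε/2`-approximated by a `C^∞` map whose set of critical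
points is locally compact and closed relative to `U`. -/
theorem exists_smooth_approximation_with_locally_compact_closed_critical_set
    {X : Type*} [NormedAddCommGroup X] [InnerProductSpace ℝ X] [CompleteSpace X]
    [TopologicalSpace.SeparableSpace X] (hX : ¬ FiniteDimensional ℝ X)
    (m : ℕ) (U : Set X) (hU : IsOpen U)
    (f : X → EuclideanSpace ℝ (Fin m)) (hf : ContinuousOn f U)
    (ε : X → ℝ) (hε : ContinuousOn ε U) (hεpos : ∀ x ∈ U, 0 < ε x) :
    ∃ φ : X → EuclideanSpace ℝ (Fin m),
      ContDiffOn ℝ (⊤ : ℕ∞) φ U ∧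
      -- the critical set `C_φ = {x ∈ U | dφ(x) is not surjective}` is locally compact:
      (∀ x ∈ {x ∈ U | ¬ Function.Surjective (fderiv ℝ φ x)},
        ∃ K : Set X, IsCompact K ∧ K ⊆ {x ∈ U | ¬ Function.Surjective (fderiv ℝ φ x)} ∧
          K ∈ nhdsWithin x {x ∈ U | ¬ Function.Surjective (fderiv ℝ φ x)}) ∧
      -- and closed relative to `U`:
      (∃ F : Set X, IsClosed F ∧
        {x ∈ U | ¬ Function.Surjective (fderiv ℝ φ x)} = F ∩ U) ∧
      (∀ x ∈ U, ‖φ x - f x‖ ≤ ε x / 2) := by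
  rcases U.eq_empty_or_nonempty with rfl | hne
  · exact ⟨0, by simp, by simp, ⟨∅, isClosed_empty, by simp⟩, by simp⟩
  obtain ⟨c, r, hcU, hr, hcov, hosc⟩ := exists_cover hU hne hf hε hεpos
  obtain ⟨A, hA⟩ := exists_linear_independent_mod_span hX (countable_range c) m
  set T := ContinuousLinearMap.adjoint A with hT
  -- `δ n` makes `‖δ n • T x‖ ≤ ε (c n) / 8` on the ball `B(c n, 2 r n)`
  let M : ℕ → ℝ := fun n => ‖T‖ * (‖c n‖ + 2 * r n) + 1
  have hM : ∀ n, 0 < M n := fun n => by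
    have := hr n
    positivity
  let δ : ℕ → ℝ := fun n => ε (c n) / 8 / M n
  have hε0 : ∀ n, 0 < ε (c n) := fun n => hεpos _ (hcU n)
  have hδ : ∀ n, 0 < δ n := fun n => div_pos (by linarith [hε0 n]) (hM n)
  set φ := approx c r δ (fun n => f (c n)) T with hφ
  have hsmooth : ContDiffOn ℝ (⊤ : ℕ∞) φ U := fun x hx => by
    obtain ⟨N, hN⟩ := hcov x hx
    exact (contDiffAt_approx c r δ _ T (hr N) hN).contDiffWithinAt
  have hclosed : ∃ F : Set X, IsClosed F ∧
      {x ∈ U | ¬ Function.Surjective (fderiv ℝ φ x)} = F ∩ U := by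
    have hopen : IsOpen (U ∩ fderiv ℝ φ ⁻¹' {L | Function.Surjective L}) :=
      (hsmooth.continuousOn_fderiv_of_isOpen hU (by simp)).isOpen_inter_preimage hU
        isOpen_surjective
    refine ⟨_, hopen.isClosed_compl, ?_⟩
    ext x
    simp only [mem_ofPred_eq, mem_inter_iff, mem_compl_iff, mem_preimage]
    tauto
  refine ⟨φ, hsmooth, ?_, hclosed, fun x hx => ?_⟩
  · intro x hx
    obtain ⟨F, hF, hCF⟩ := hclosed
    obtain ⟨N, hN⟩ := hcov x hx.1
    obtain ⟨s, hs, hsub⟩ := Metric.nhds_basis_closedBall.mem_iff.1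
      (inter_mem (hU.mem_nhds hx.1) (isOpen_ball.mem_nhds hN))
    set C := {x ∈ U | ¬ Function.Surjective (fderiv ℝ φ x)} with hC
    have hKF : C ∩ closedBall x s = F ∩ closedBall x s := by
      rw [hCF, inter_assoc, inter_eq_right.2 fun y hy => (hsub hy).1]
    refine ⟨C ∩ closedBall x s, ?_, inter_subset_left,
      inter_mem_nhdsWithin _ (closedBall_mem_nhds x hs)⟩
    set W := Submodule.span ℝ (c '' Iic N) ⊔
      LinearMap.range (A : EuclideanSpace ℝ (Fin m) →ₗ[ℝ] X) with hW
    have : FiniteDimensional ℝ (Submodule.span ℝ (c '' Iic N)) :=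
      FiniteDimensional.span_of_finite ℝ ((finite_Iic N).image c)
    have hWfd : FiniteDimensional ℝ W := inferInstance
    have : ProperSpace W := FiniteDimensional.proper ℝ W
    have hsubW : C ∩ closedBall x s ⊆ W := fun y hy =>
      mem_of_not_surjective c r δ _ A hA (hr N) hδ (hsub hy.2).2 hy.1.2
    have hxW : x ∈ W := hsubW ⟨hx, mem_closedBall_self hs.le⟩
    have hcomp : IsCompact ((↑) '' closedBall (⟨x, hxW⟩ : W) s : Set X) :=
      (isCompact_closedBall _ _).image continuous_subtype_val
    refine hcomp.of_isClosed_subset (hKF ▸ hF.inter isClosed_closedBall) fun y hy => ?_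
    exact ⟨⟨y, hsubW hy⟩, hy.2, rfl⟩
  · obtain ⟨N, hN⟩ := hcov x hx
    refine norm_approx_sub_le c r δ _ T hr hN _ _ fun n hn => ?_
    obtain ⟨h1, h2⟩ := hosc n x hn
    have h3 : ‖δ n • T x‖ ≤ ε (c n) / 8 := by
      have hxn : ‖x‖ ≤ ‖c n‖ + 2 * r n := by
        rw [mem_ball_iff_norm] at hn
        linarith [norm_le_norm_add_norm_sub' x (c n)]
      have hTx : ‖T x‖ ≤ M n := by
        have : ‖T x‖ ≤ ‖T‖ * (‖c n‖ + 2 * r n) :=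
          (T.le_opNorm x).trans (mul_le_mul_of_nonneg_left hxn (norm_nonneg _))
        linarith
      rw [norm_smul, Real.norm_of_nonneg (hδ n).le]
      calc δ n * ‖T x‖ ≤ δ n * M n := mul_le_mul_of_nonneg_left hTx (hδ n).le
        _ = ε (c n) / 8 := div_mul_cancel₀ _ (hM n).ne'
    calc ‖f (c n) + δ n • T x - f x‖ = ‖(f (c n) - f x) + δ n • T x‖ := by
          congr 1
          abel
      _ ≤ ‖f (c n) - f x‖ + ‖δ n • T x‖ := norm_add_le _ _
      _ ≤ ε x / 2 := by linarith
end

section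
/- Let X be a separable infinite-dimensional real Hilbert space, let (y_n) be a sequence of linearly independent vectors in X, and let (s_n) be a sequence of positive real numbers. Then there exists a sequence of positive numbers (r_n) with s_n ≤ r_n ≤ (3/2)·s_n such that, denoting by S_n the sphere of center y_n and radius r_n: (i) for each finite strictly increasing sequence of positive integers k₁ < k₂ < … < k_m, the affine span of {y_{k₁}, …, y_{k_m}} has empty intersection with S_{k₁} ∩ … ∩ S_{k_m}; and (ii) y_n ∉ S_k for all n, k. -/
open Metric Set

/-!
The radii are chosen one after another.  Suppose `r k` is known for all `k < n`, and let `t` be a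
nonempty set of indices below `n`.  Inside the affine span of the centers indexed by `t ∪ {n}`, the
spheres indexed by `t` have at most two common points: two such points differ by a vector
orthogonal to the affine span of `y '' t`, which has codimension at most one there, so all of them
lie on one line, and a line meets a sphere at most twice (`finite_inter_spheres`).  Hence
`r n` only has to avoid the distances from `y n` to these points, for the countably many `t`, and the
distances from `y n` to all the centers.  That is a countable set, so it cannot contain the
interval `[s n, (3/2) s n]`.  A finite index set with largest element `n` and at least two elements
is then handled by the choice of `r n`; for a singleton, the affine span is the center itself.
-/

/-- Dependent recursion: if each term can be chosen in terms of all the earlier ones, then a whole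
sequence can be. -/
lemma exists_seq_of_forall_prefix {P : (n : ℕ) → ((k : ℕ) → k < n → ℝ) → ℝ → Prop}
    (h : ∀ n f, ∃ x, P n f x) : ∃ r : ℕ → ℝ, ∀ n, P n (fun k _ => r k) (r n) := by
  choose F hF using h
  let r : ℕ → ℝ := (wellFounded_lt (α := ℕ)).fix F
  have e : ∀ n, r n = F n (fun k _ => r k) := fun n => WellFounded.fix_eq _ F n
  refine ⟨r, fun n => ?_⟩
  have := hF n (fun k _ => r k)
  rwa [← e n] at this

/-- Spheres indexed by a nonempty `t` have finitely many (at most two) common points in the affine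
span of their centers and one additional point `y n`. -/
lemma finite_inter_spheres {X : Type*} [NormedAddCommGroup X] [InnerProductSpace ℝ X]
    (y : ℕ → X) (r : ℕ → ℝ) (n : ℕ) (t : Finset ℕ) (ht : t.Nonempty) :
    {x : X | x ∈ affineSpan ℝ (y '' insert n (t : Set ℕ)) ∧ ∀ k ∈ t, dist x (y k) = r k}.Finite := by
  obtain ⟨i, hi⟩ := ht
  set V : Submodule ℝ X := Submodule.span ℝ ((fun k => y k - y i) '' (t : Set ℕ)) with hV
  have : FiniteDimensional ℝ V :=
    FiniteDimensional.span_of_finite ℝ (t.finite_toSet.image _)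
  -- `q` is the component of `y n - y i` orthogonal to `V`.
  set p : X := V.starProjection (y n - y i) with hp
  set q : X := y n - y i - p with hq
  have hpV : p ∈ V := V.starProjection_apply_mem _
  have hqV : ∀ v ∈ V, inner ℝ v q = 0 := fun v hv =>
    V.sub_starProjection_mem_orthogonal (y n - y i) v hv
  have decomp : ∀ x ∈ affineSpan ℝ (y '' insert n (t : Set ℕ)),
      ∃ v ∈ V, ∃ a : ℝ, x = y i + v + a • q := by
    intro x hx
    have hi' : i ∈ insert n (t : Set ℕ) := Or.inr hi
    have h1 : x -ᵥ y i ∈ (affineSpan ℝ (y '' insert n (t : Set ℕ))).direction :=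
      AffineSubspace.vsub_mem_direction hx (subset_affineSpan ℝ _ ⟨i, hi', rfl⟩)
    rw [direction_affineSpan, vectorSpan_eq_span_vsub_set_right ℝ (mem_image_of_mem y hi'),
      image_image, image_insert_eq, Submodule.mem_span_insert] at h1
    obtain ⟨a, z, hz, h2⟩ := h1
    refine ⟨z + a • p, V.add_mem hz (V.smul_mem a hpV), a, ?_⟩
    simp only [vsub_eq_sub] at h2
    rw [hq, smul_sub, sub_eq_iff_eq_add.1 h2]
    abel
  rcases Set.eq_empty_or_nonempty {x : X | x ∈ affineSpan ℝ (y '' insert n (t : Set ℕ)) ∧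
    ∀ k ∈ t, dist x (y k) = r k} with h0 | ⟨x₀, hx₀, hr₀⟩
  · rw [h0]; exact finite_empty
  obtain ⟨v₀, hv₀, a₀, e₀⟩ := decomp x₀ hx₀
  -- Any common point is `x₀` or its reflection through the affine span of `y '' t`.
  refine (Set.toFinite {y i + v₀ + a₀ • q, y i + v₀ - a₀ • q}).subset ?_
  rintro x ⟨hx, hr⟩
  obtain ⟨v, hv, a, e⟩ := decomp x hx
  have horth : ∀ u ∈ V, inner ℝ u (x - x₀) = 0 := by
    intro u hu
    have hle : V ≤ (Submodule.span ℝ {x - x₀})ᗮ := by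
      rw [hV, Submodule.span_le]
      rintro _ ⟨k, hk, rfl⟩
      rw [SetLike.mem_coe, Submodule.mem_orthogonal_singleton_iff_inner_left]
      have key : ∀ z : X, ‖z - y i‖ ^ 2 - ‖z - y k‖ ^ 2
          = 2 * inner ℝ (y k - y i) z + (‖y i‖ ^ 2 - ‖y k‖ ^ 2) := by
        intro z
        rw [norm_sub_sq_real, norm_sub_sq_real, inner_sub_left, real_inner_comm z, real_inner_comm z]
        ring
      have k1 := key x
      have k2 := key x₀
      rw [← dist_eq_norm, ← dist_eq_norm, hr i hi, hr k hk] at k1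
      rw [← dist_eq_norm, ← dist_eq_norm, hr₀ i hi, hr₀ k hk] at k2
      rw [inner_sub_right]
      linarith
    exact Submodule.mem_orthogonal_singleton_iff_inner_left.1 (hle hu)
  have hvv : v = v₀ := by
    have hd : v - v₀ ∈ V := V.sub_mem hv hv₀
    have h1 := horth _ hd
    have h2 : x - x₀ = (v - v₀) + (a - a₀) • q := by rw [e, e₀, sub_smul]; abel
    rw [h2, inner_add_right, inner_smul_right, hqV _ hd, mul_zero, add_zero,
      inner_self_eq_zero] at h1
    exact sub_eq_zero.1 h1
  subst hvv
  have pyth : ∀ b : ℝ, ‖v + b • q‖ ^ 2 = ‖v‖ ^ 2 + b ^ 2 * ‖q‖ ^ 2 := by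
    intro b
    rw [norm_add_sq_real, inner_smul_right, hqV v hv, norm_smul, mul_pow, Real.norm_eq_abs, sq_abs]
    ring
  have h3 : ‖v + a • q‖ ^ 2 = ‖v + a₀ • q‖ ^ 2 := by
    have h1 := hr i hi
    have h2 := hr₀ i hi
    rw [dist_eq_norm, e, add_assoc, add_sub_cancel_left] at h1
    rw [dist_eq_norm, e₀, add_assoc, add_sub_cancel_left] at h2
    rw [h1, h2]
  rw [pyth, pyth] at h3
  rw [e]
  have h4 : (a ^ 2 - a₀ ^ 2) * ‖q‖ ^ 2 = 0 := by linarith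
  rcases mul_eq_zero.1 h4 with h | h
  · rcases sq_eq_sq_iff_eq_or_eq_neg.1 (sub_eq_zero.1 h) with rfl | rfl
    · left; rfl
    · right; simp [sub_eq_add_neg]
  · have : q = 0 := by simpa using h
    left; simp [this]

/-- Given a linearly independent sequence `(yₙ)` in a separable infinite-dimensional real
Hilbert space and positive numbers `(sₙ)`, one can choose radii `rₙ ∈ [sₙ, (3/2)sₙ]` so
that any finite intersection of the spheres `Sₙ = S(yₙ, rₙ)` misses the affine span of the
corresponding centers, and no center lies on any of the spheres. -/
theorem controlled_intersection_of_spheres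
    {X : Type*} [NormedAddCommGroup X] [InnerProductSpace ℝ X] [CompleteSpace X]
    [TopologicalSpace.SeparableSpace X] (hX : ¬ FiniteDimensional ℝ X)
    (y : ℕ → X) (hy : LinearIndependent ℝ y)
    (s : ℕ → ℝ) (hs : ∀ n, 0 < s n) :
    ∃ r : ℕ → ℝ,
      (∀ n, s n ≤ r n ∧ r n ≤ (3 / 2) * s n) ∧
      -- (i) for every finite nonempty set of indices, the affine span of the corresponding
      -- centers does not meet the intersection of the corresponding spheres:
      (∀ t : Finset ℕ, t.Nonempty →
        (affineSpan ℝ (y '' ↑t) : Set X) ∩ (⋂ k ∈ t, sphere (y k) (r k)) = ∅) ∧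
      -- (ii) no center lies on any sphere:
      (∀ n k, y n ∉ sphere (y k) (r k)) := by
  have step : ∀ (n : ℕ) (f : (k : ℕ) → k < n → ℝ), ∃ ρ : ℝ, (s n ≤ ρ ∧ ρ ≤ (3 / 2) * s n) ∧
      (∀ m, dist (y m) (y n) ≠ ρ) ∧
      ∀ t : Finset ℕ, t.Nonempty → (∀ k ∈ t, k < n) →
        ∀ x ∈ affineSpan ℝ (y '' insert n (t : Set ℕ)),
          (∀ k (h : k < n), k ∈ t → dist x (y k) = f k h) → dist x (y n) ≠ ρ := by
    intro n f
    let g : ℕ → ℝ := fun k => if h : k < n then f k h else 0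
    let bad : Set ℝ := range (fun m => dist (y m) (y n)) ∪
      ⋃ t : {t : Finset ℕ // t.Nonempty}, (fun x => dist x (y n)) ''
        {x : X | x ∈ affineSpan ℝ (y '' insert n (t.1 : Set ℕ)) ∧ ∀ k ∈ t.1, dist x (y k) = g k}
    have hbad : bad.Countable := (countable_range _).union <| countable_iUnion fun t =>
      ((finite_inter_spheres y g n t.1 t.2).image _).countable
    have hnot : ¬ Icc (s n) ((3 / 2) * s n) ⊆ bad := fun hsub =>
      (Cardinal.Real.Icc_countable_iff.not.2 (by linarith [hs n])) (hbad.mono hsub)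
    obtain ⟨ρ, hρ, hρb⟩ := not_subset.1 hnot
    refine ⟨ρ, hρ, fun m hm => hρb (Or.inl ⟨m, hm⟩), fun t ht hlt x hx hd hxρ => hρb (Or.inr ?_)⟩
    refine mem_iUnion.2 ⟨⟨t, ht⟩, x, ⟨hx, fun k hk => ?_⟩, hxρ⟩
    simp only [g, dif_pos (hlt k hk)]
    exact hd k (hlt k hk) hk
  obtain ⟨r, hr⟩ := exists_seq_of_forall_prefix step
  refine ⟨r, fun n => (hr n).1, fun t ht => ?_, fun n k h => (hr k).2.1 n h⟩
  rw [eq_empty_iff_forall_notMem]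
  rintro x ⟨hx, hxS⟩
  have hd : ∀ k ∈ t, dist x (y k) = r k := fun k hk => mem_iInter₂.1 hxS k hk
  set n := t.max' ht with hn
  have hnt : n ∈ t := t.max'_mem ht
  have hins : insert n ((t.erase n : Finset ℕ) : Set ℕ) = (t : Set ℕ) := by
    rw [← Finset.coe_insert, Finset.insert_erase hnt]
  rcases (t.erase n).eq_empty_or_nonempty with h0 | h0
  · rw [← hins, h0] at hx
    simp only [Finset.coe_empty, insert_empty_eq, image_singleton, SetLike.mem_coe,
      AffineSubspace.mem_affineSpan_singleton] at hx
    exact (hr n).2.1 n (hx ▸ hd n hnt)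
  · refine (hr n).2.2 (t.erase n) h0 (fun k hk => ?_) x (by rw [hins]; exact hx)
      (fun k _ hk => hd k (Finset.mem_of_mem_erase hk)) (hd n hnt)
    exact t.lt_max'_of_mem_erase_max' ht hk
end

section
/- Let X be a separable infinite-dimensional real Hilbert space, let (x_n) be a sequence of points in X and (r_n) a sequence of positive numbers such that X = ⋃_{n=1}^∞ B(x_n, r_n/2). Then there exists a sequence (y_n) of linearly independent vectors in X with y_n ∈ B(x_n, r_n/2) for every n, such that X = ⋃_{n=1}^∞ B(y_n, r_n). -/
open Metric Set

/-!
If `‖yₙ - xₙ‖ < rₙ/2`, then `B(xₙ, rₙ/2) ⊆ B(yₙ, rₙ)`, so any choice of `yₙ ∈ B(xₙ, rₙ/2)` keeps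
the covering property. For linear independence, `yₙ` is chosen recursively outside the span of the
earlier `y`s: that span is finite-dimensional, hence a proper subspace, and a proper subspace
contains no ball (`exists_mem_ball_notMem_span`).
-/

/-- The span of finitely many vectors of an infinite-dimensional space contains no ball. -/
lemma exists_mem_ball_notMem_span {X : Type*} [NormedAddCommGroup X] [NormedSpace ℝ X]
    (hX : ¬ FiniteDimensional ℝ X) {s : Set X} (hs : s.Finite) (c : X) {ρ : ℝ} (hρ : 0 < ρ) :
    ∃ z ∈ ball c ρ, z ∉ Submodule.span ℝ s := by
  by_contra! h
  have htop : Submodule.span ℝ s = ⊤ :=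
    Submodule.eq_top_of_nonempty_interior' _
      ⟨c, mem_interior.2 ⟨ball c ρ, h, isOpen_ball, mem_ball_self hρ⟩⟩
  exact hX (Module.finite_def.2 (htop ▸ Submodule.fg_span hs))

/-- A sequence none of whose terms lies in the span of the preceding ones is linearly
independent. -/
lemma linearIndependent_of_notMem_span_Iio {X : Type*} [AddCommGroup X] [Module ℝ X] {y : ℕ → X}
    (h : ∀ n, y n ∉ Submodule.span ℝ (y '' Iio n)) : LinearIndependent ℝ y := by
  have hfin : ∀ n, LinearIndepOn ℝ y (Iio n) := by
    intro n
    induction n with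
    | zero => simp
    | succ n ih =>
      have hsucc : Iio (n + 1) = insert n (Iio n) := by ext; simp
      rw [hsucc]
      exact ih.insert (h n)
  have hunion : LinearIndepOn ℝ y (⋃ n, Iio n) :=
    linearIndepOn_iUnion_of_directed
      (Monotone.directed_le fun _ _ hab => Iio_subset_Iio hab) hfin
  have huniv : (⋃ n : ℕ, Iio n) = univ := iUnion_Iio
  rwa [huniv, linearIndepOn_univ_iff] at hunion

/-- If balls `B(xₙ, rₙ/2)` cover a separable infinite-dimensional real Hilbert space, one
can perturb the centers inside those balls so that they become linearly independent while
the balls `B(yₙ, rₙ)` still cover the space. -/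
theorem perturbed_centers_linearly_independent_cover
    {X : Type*} [NormedAddCommGroup X] [InnerProductSpace ℝ X] [CompleteSpace X]
    [TopologicalSpace.SeparableSpace X] (hX : ¬ FiniteDimensional ℝ X)
    (x : ℕ → X) (r : ℕ → ℝ) (hr : ∀ n, 0 < r n)
    (hcov : ⋃ n, ball (x n) (r n / 2) = univ) :
    ∃ y : ℕ → X,
      LinearIndependent ℝ y ∧
      (∀ n, y n ∈ ball (x n) (r n / 2)) ∧
      ⋃ n, ball (y n) (r n) = univ := by
  -- `next n f` is the `n`-th vector, given the earlier ones `f m`, `m < n`.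
  have hstep : ∀ (n : ℕ) (f : ∀ m, m < n → X), ∃ z ∈ ball (x n) (r n / 2),
      z ∉ Submodule.span ℝ (range fun m : Iio n => f m m.2) := fun n f =>
    exists_mem_ball_notMem_span hX (finite_range _) (x n) (half_pos (hr n))
  choose next hball hspan using hstep
  let y : ℕ → X := fun n => Nat.strongRec (motive := fun _ => X) next n
  have hy : ∀ n, y n = next n fun m _ => y m := fun n => by
    simp only [y]
    rw [Nat.strongRec_eq]
  have hyball : ∀ n, y n ∈ ball (x n) (r n / 2) := fun n => by
    rw [hy]
    exact hball _ _
  refine ⟨y, linearIndependent_of_notMem_span_Iio fun n => ?_, hyball, ?_⟩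
  · rw [image_eq_range, hy]
    exact hspan n fun m _ => y m
  · refine eq_univ_of_univ_subset (hcov ▸ iUnion_mono fun n => ball_subset_ball' ?_)
    have hdist := mem_ball'.1 (hyball n)
    linarith
end

section
/- Let X be a separable infinite-dimensional real Hilbert space, let m ≥ 1, and for each j = 1, …, m let (x^j_n)_{n∈ℕ} be points of X and (r^j_n)_{n∈ℕ} positive numbers such that X = ⋃_{n=1}^∞ B(x^j_n, r^j_n/2). Then one can choose points y^j_n ∈ B(x^j_n, r^j_n/2) for all j = 1, …, m and n ∈ ℕ such that the whole family {y^j_n : n ∈ ℕ, j = 1, …, m} is a set of linearly independent vectors and X = ⋃_{n=1}^∞ B(y^j_n, r^j_n) for every j = 1, …, m. -/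
/-!
A finite-dimensional subspace of an infinite-dimensional normed space is proper, hence has empty
interior, so no ball is contained in it. Enumerating all the balls `B(xʲₙ, rʲₙ/2)` in a single
sequence, one therefore picks the new centers recursively, each outside the span of the finitely
many centers already chosen (`exists_linearIndependent_mem_of_isOpen`). The covering property
holds for any choice of `yʲₙ ∈ B(xʲₙ, rʲₙ/2)`, since `B(xʲₙ, rʲₙ/2) ⊆ B(yʲₙ, rʲₙ)` by the
triangle inequality.
-/

open Metric Set

/-- In an infinite-dimensional normed space, every sequence of nonempty open sets has a linearly
independent sequence of representatives. -/
theorem exists_linearIndependent_mem_of_isOpen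
    {X : Type*} [NormedAddCommGroup X] [NormedSpace ℝ X] (hX : ¬ FiniteDimensional ℝ X)
    (U : ℕ → Set X) (hU : ∀ n, IsOpen (U n)) (hne : ∀ n, (U n).Nonempty) :
    ∃ y : ℕ → X, (∀ n, y n ∈ U n) ∧ LinearIndependent ℝ y := by
  have pick : ∀ n (t : Set X), ∃ c, t.Finite → c ∈ U n ∧ c ∉ Submodule.span ℝ t := by
    intro n t
    by_contra! h
    have ht : t.Finite := (h 0).1
    have hsub : U n ⊆ (Submodule.span ℝ t : Set X) := fun c hc => (h c).2 hc
    have htop : Submodule.span ℝ t = ⊤ :=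
      Submodule.eq_top_of_nonempty_interior' _
        ((hne n).mono (interior_maximal hsub (hU n)))
    exact hX ⟨⟨ht.toFinset, by simpa using htop⟩⟩
  choose c hc using pick
  let F : ∀ n, (∀ k, k < n → X) → X := fun n ih => c n (range fun i : Fin n => ih i i.2)
  let y : ℕ → X := fun n => Nat.strongRecOn n F
  have hy : ∀ n, y n ∈ U n ∧ y n ∉ Submodule.span ℝ (y '' Iio n) := by
    intro n
    have himage : y '' Iio n = range fun i : Fin n => y i := by
      ext z
      simp [Fin.exists_iff]
    have heq : y n = c n (y '' Iio n) := by
      rw [himage]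
      exact Nat.strongRecOn_eq F n
    have h := hc n (y '' Iio n) ((finite_Iio n).image y)
    rwa [← heq] at h
  refine ⟨y, fun n => (hy n).1, ?_⟩
  have hfin : ∀ n, LinearIndepOn ℝ y (Iio n) := by
    intro n
    induction n with
    | zero => simp
    | succ n ih =>
      have hIio : Iio (n + 1) = insert n (Iio n) := by
        ext k
        simp only [mem_Iio, mem_insert_iff]
        omega
      rw [hIio]
      exact ih.insert (hy n).2
  have hunion := linearIndepOn_iUnion_of_directed
    (monotone_Iio.directed_le : Directed (· ⊆ ·) fun n : ℕ => Iio n) hfin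
  rwa [iUnion_Iio, linearIndepOn_univ_iff] at hunion

/-- Given `m ≥ 1` families of balls `B(xʲₙ, rʲₙ/2)` each covering a separable
infinite-dimensional real Hilbert space, one can perturb all the centers inside those
balls so that the whole family of new centers is linearly independent while, for each
`j`, the balls `B(yʲₙ, rʲₙ)` still cover the space. -/
theorem perturbed_centers_of_several_families_linearly_independent_cover
    {X : Type*} [NormedAddCommGroup X] [InnerProductSpace ℝ X] [CompleteSpace X]
    [TopologicalSpace.SeparableSpace X] (hX : ¬ FiniteDimensional ℝ X)
    (m : ℕ) (hm : 1 ≤ m)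
    (x : Fin m → ℕ → X) (r : Fin m → ℕ → ℝ) (hr : ∀ j n, 0 < r j n)
    (hcov : ∀ j, ⋃ n, ball (x j n) (r j n / 2) = univ) :
    ∃ y : Fin m → ℕ → X,
      (∀ j n, y j n ∈ ball (x j n) (r j n / 2)) ∧
      LinearIndependent ℝ (fun p : Fin m × ℕ => y p.1 p.2) ∧
      (∀ j, ⋃ n, ball (y j n) (r j n) = univ) := by
  have : NeZero m := ⟨by omega⟩
  let e : Fin m × ℕ ≃ ℕ := (Denumerable.ofEncodableOfInfinite (Fin m × ℕ)).eqv
  obtain ⟨z, hz, hlin⟩ := exists_linearIndependent_mem_of_isOpen hX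
    (fun k => ball (x (e.symm k).1 (e.symm k).2) (r (e.symm k).1 (e.symm k).2 / 2))
    (fun _ => isOpen_ball) (fun k => nonempty_ball.2 (half_pos (hr _ _)))
  have hmem : ∀ j n, z (e (j, n)) ∈ ball (x j n) (r j n / 2) := fun j n => by
    simpa using hz (e (j, n))
  refine ⟨fun j n => z (e (j, n)), hmem, hlin.comp e e.injective, fun j => ?_⟩
  refine eq_univ_of_subset (iUnion_mono fun n => ball_subset_ball' ?_) (hcov j)
  have := hmem j n
  rw [mem_ball'] at this
  linarith
end

section
/- Let X be a real Hilbert space, let y₁, …, y_n ∈ X be linearly independent, let g : ℝⁿ → ℝ be a differentiable function, and define F : X → ℝ by F(x) = g(‖x − y₁‖², …, ‖x − y_n‖²). If x ∈ X is such that the Fréchet derivative F'(x) = 0 but the gradient of g at the point (‖x − y₁‖², …, ‖x − y_n‖²) is nonzero, then x belongs to the affine span of {y₁, …, y_n}. -/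
open Metric Set

/-!
With `cᵢ = ∂ᵢg`, the chain rule turns `F'(x) = 0` into `∑ cᵢ (x - yᵢ) = 0`, that is
`(∑ cᵢ) x = ∑ cᵢ yᵢ`. If `∑ cᵢ` vanished, linear independence would force every `cᵢ` to vanish,
contradicting the nonvanishing of the gradient of `g`. Dividing by `∑ cᵢ` therefore exhibits `x` as
an affine combination of the `yᵢ`.
-/

/-- If `F(x) = g(‖x − y₁‖², …, ‖x − yₙ‖²)` with `y₁, …, yₙ` linearly independent in a real
Hilbert space and `g` differentiable, then any critical point of `F` at which the gradient
of `g` does not vanish lies in the affine span of `y₁, …, yₙ`. -/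
theorem critical_points_of_radial_combination_lie_in_affine_span
    {X : Type*} [NormedAddCommGroup X] [InnerProductSpace ℝ X] [CompleteSpace X]
    (n : ℕ) (y : Fin n → X) (hy : LinearIndependent ℝ y)
    (g : (Fin n → ℝ) → ℝ) (hg : Differentiable ℝ g)
    (F : X → ℝ) (hF : F = fun x => g (fun i => ‖x - y i‖ ^ 2))
    (x : X)
    (hcrit : fderiv ℝ F x = 0)
    (hgrad : fderiv ℝ g (fun i => ‖x - y i‖ ^ 2) ≠ 0) :
    x ∈ affineSpan ℝ (Set.range y) := by
  subst hF
  set p : Fin n → ℝ := fun i => ‖x - y i‖ ^ 2 with hp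
  set c : Fin n → ℝ := fun i => fderiv ℝ g p (Pi.single i 1) with hc
  have hL : ∀ v : Fin n → ℝ, fderiv ℝ g p v = ∑ i, v i * c i := fun v => by
    conv_lhs => rw [pi_eq_sum_univ' v]
    simp [hc, map_sum]
  have hinner : HasFDerivAt (fun z : X => fun i => ‖z - y i‖ ^ 2)
      (ContinuousLinearMap.pi fun i => 2 • innerSL ℝ (x - y i)) x := by
    refine hasFDerivAt_pi.2 fun i => ?_
    simpa using ((hasFDerivAt_id x).sub_const (y i)).norm_sq
  have hchain := ((hg p).hasFDerivAt.comp x hinner).fderiv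
  have hsum : ∑ i, c i • (x - y i) = 0 := by
    refine ext_inner_right ℝ fun v => ?_
    have h0 : fderiv ℝ g p (fun i => 2 * inner ℝ (x - y i) v) = 0 := by
      have h1 := congrArg (fun T : X →L[ℝ] ℝ => T v) (hchain.symm.trans hcrit)
      simp only [ContinuousLinearMap.comp_apply, zero_apply] at h1
      rw [← h1]
      congr 1
      ext i
      simp [inner_sub_left]
    rw [hL] at h0
    have h2 : 2 * ∑ i, c i * inner ℝ (x - y i) v = 0 := by
      rw [← h0, Finset.mul_sum]
      exact Finset.sum_congr rfl fun i _ => by ring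
    rw [sum_inner, inner_zero_left]
    simp only [real_inner_smul_left]
    linarith
  have hx : (∑ i, c i) • x = ∑ i, c i • y i := by
    simpa [smul_sub, Finset.sum_sub_distrib, ← Finset.sum_smul, sub_eq_zero] using hsum
  have hC : ∑ i, c i ≠ 0 := fun h => by
    rw [h, zero_smul] at hx
    have hc0 := Fintype.linearIndependent_iff.1 hy c hx.symm
    exact hgrad (ContinuousLinearMap.ext fun v => by simp [hL, hc0])
  have hw : ∑ i, (∑ j, c j)⁻¹ * c i = 1 := by
    rw [← Finset.mul_sum, inv_mul_cancel₀ hC]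
  have hmem := affineCombination_mem_affineSpan (s := Finset.univ) hw y
  rw [Finset.affineCombination_eq_linear_combination _ _ _ hw] at hmem
  simp only [mul_smul] at hmem
  rwa [← Finset.smul_sum, ← hx, inv_smul_smul₀ hC] at hmem
end

section
/- Let X be a real Hilbert space, let x ∈ X, and let {y^j_k : 1 ≤ j ≤ m, 1 ≤ k ≤ n} be a linearly independent family in X. Suppose that for each j = 1, …, m, T_j : X → ℝ is the continuous linear functional T_j(v) = ⟨∑_{k=1}^n β^j_k (x − y^j_k), v⟩ for some real numbers β^j_k not all zero (for that j). If the linear map X → ℝ^m given by v ↦ (T₁(v), …, T_m(v)) is not surjective, then x belongs to the affine span of the points {y^j_k : 1 ≤ j ≤ m, 1 ≤ k ≤ n}. -/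
/-!
Put `zⱼ = ∑ₖ βʲₖ (x − yʲₖ)`. If `v ↦ (⟪zⱼ, v⟫)ⱼ` is not onto, a nonzero functional on `ℝᵐ`
vanishes on its range, which gives a nontrivial relation `∑ⱼ cⱼ zⱼ = 0`
(`exists_relation_of_not_surjective`). With `wʲₖ = cⱼ βʲₖ`, not all zero, the relation reads
`(∑ w) x = ∑ wʲₖ yʲₖ`. Linear independence of the `yʲₖ` forces `∑ w ≠ 0`, and dividing by it
exhibits `x` as an affine combination of the `yʲₖ`.
-/

open Metric Set
open scoped RealInnerProductSpace

theorem exists_relation_of_not_surjective {X : Type*} [NormedAddCommGroup X]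
    [InnerProductSpace ℝ X] {m : ℕ} (z : Fin m → X)
    (h : ¬ Function.Surjective (fun v : X => (fun j : Fin m => ⟪z j, v⟫))) :
    ∃ c : Fin m → ℝ, (∃ j, c j ≠ 0) ∧ ∑ j, c j • z j = 0 := by
  let L : X →ₗ[ℝ] (Fin m → ℝ) := LinearMap.pi fun j => (innerSL ℝ (z j)).toLinearMap
  have hL : LinearMap.range L < ⊤ :=
    lt_top_iff_ne_top.2 fun htop => h (LinearMap.range_eq_top.1 htop)
  obtain ⟨f, hf, hfL⟩ := Submodule.exists_le_ker_of_lt_top _ hL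
  have hfc (u : Fin m → ℝ) : f u = ∑ j, u j * f (Pi.single j 1) := by
    conv_lhs => rw [pi_eq_sum_univ' u, map_sum]
    refine Finset.sum_congr rfl fun j _ => ?_
    rw [map_smul, smul_eq_mul]
  refine ⟨fun j => f (Pi.single j 1), ?_, ?_⟩
  · by_contra! hc
    exact hf (LinearMap.ext fun u => by simp [hfc u, hc])
  · refine ext_inner_right ℝ fun v => ?_
    have hv : f (L v) = 0 := hfL (LinearMap.mem_range_self L v)
    rw [hfc] at hv
    simp only [sum_inner, inner_smul_left, inner_zero_left]
    rw [← hv]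
    exact Finset.sum_congr rfl fun j _ => by simp [L, mul_comm]

/-- If each functional `Tⱼ(v) = ⟪∑ₖ βʲₖ (x − yʲₖ), v⟫` is a nontrivial combination of the
functionals `⟪x − yʲₖ, ·⟫`, with the whole family `(yʲₖ)` linearly independent, and the
map `v ↦ (T₁ v, …, Tₘ v)` is not surjective onto `ℝᵐ`, then `x` lies in the affine span
of the points `yʲₖ`. -/
theorem not_surjective_implies_mem_affine_span
    {X : Type*} [NormedAddCommGroup X] [InnerProductSpace ℝ X] [CompleteSpace X]
    (m n : ℕ) (x : X) (y : Fin m → Fin n → X)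
    (hy : LinearIndependent ℝ (fun p : Fin m × Fin n => y p.1 p.2))
    (β : Fin m → Fin n → ℝ) (hβ : ∀ j, ∃ k, β j k ≠ 0)
    (hnotsurj : ¬ Function.Surjective
      (fun v : X => (fun j : Fin m => ⟪∑ k, β j k • (x - y j k), v⟫) : X → Fin m → ℝ)) :
    x ∈ affineSpan ℝ (Set.range (fun p : Fin m × Fin n => y p.1 p.2)) := by
  obtain ⟨c, ⟨j₀, hj₀⟩, hc⟩ := exists_relation_of_not_surjective _ hnotsurj
  obtain ⟨k₀, hk₀⟩ := hβ j₀
  let w : Fin m × Fin n → ℝ := fun p => c p.1 * β p.1 p.2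
  have hrel : (∑ p, w p) • x = ∑ p, w p • y p.1 p.2 := by
    rw [← sub_eq_zero, Finset.sum_smul, ← Finset.sum_sub_distrib, Fintype.sum_prod_type, ← hc]
    simp only [w, Finset.smul_sum, smul_smul, smul_sub]
  have hs : ∑ p, w p ≠ 0 := by
    intro hs
    rw [hs, zero_smul] at hrel
    exact mul_ne_zero hj₀ hk₀ (Fintype.linearIndependent_iff.1 hy w hrel.symm (j₀, k₀))
  have hsum : ∑ p, (∑ q, w q)⁻¹ * w p = 1 := by
    rw [← Finset.mul_sum, inv_mul_cancel₀ hs]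
  have hmem := affineCombination_mem_affineSpan hsum (fun p : Fin m × Fin n => y p.1 p.2)
  rw [Finset.affineCombination_eq_linear_combination _ _ _ hsum] at hmem
  simpa only [mul_smul, ← Finset.smul_sum, ← hrel, inv_smul_smul₀ hs] using hmem
end

section
/- Let X be a real normed space, let (y_n) be points of X and (r_n) positive numbers with X = ⋃_{n=1}^∞ B(y_n, r_n), and let (λ_n)_{n≥2} be a strictly increasing sequence with 1/2 < λ_n < 1 for all n and lim_{n→∞} λ_n = 1. Define B₁ = B(y₁, r₁) and, for n ≥ 2, B_n = B(y_n, r_n) \ ⋃_{j=1}^{n−1} closedBall(y_j, λ_n r_j). Then the family (B_n)_{n∈ℕ} is an open cover of X which is locally finite: every point of X has a neighborhood meeting only finitely many of the sets B_n. -/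
/-!
A point `x` lies in `Bₙ` for the least `n` with `x ∈ B(yₙ, rₙ)`, because
`closedBall(yⱼ, λₙ rⱼ) ⊆ B(yⱼ, rⱼ)` when `λₙ < 1`. For local finiteness, let `x ∈ B(yₘ, rₘ)` and
choose `t` with `dist x yₘ < t < rₘ`. Since `λₙ rₘ → rₘ`, the neighbourhood `B(yₘ, t)` of `x` is
contained in `closedBall(yₘ, λₙ rₘ)`, hence disjoint from `Bₙ`, for all large `n`.
-/

open Metric Set

/-- The scalloped balls `Bₙ = B(yₙ, rₙ) \ ⋃_{j<n} closedBall(yⱼ, λₙ rⱼ)` built from a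
covering family of balls and a strictly increasing sequence `λₙ ∈ (1/2, 1)` tending to `1`
form a locally finite open cover of the space. -/
theorem scalloped_balls_form_locally_finite_open_cover
    {X : Type*} [NormedAddCommGroup X] [NormedSpace ℝ X]
    (y : ℕ → X) (r : ℕ → ℝ) (hr : ∀ n, 0 < r n)
    (hcov : ⋃ n, ball (y n) (r n) = univ)
    (lam : ℕ → ℝ) (hmono : StrictMono lam)
    (hlam : ∀ n, 1 / 2 < lam n ∧ lam n < 1)
    (hlim : Filter.Tendsto lam Filter.atTop (nhds 1))
    (B : ℕ → Set X)
    (hB0 : B 0 = ball (y 0) (r 0))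
    (hBn : ∀ n, 0 < n →
      B n = ball (y n) (r n) \ ⋃ j < n, closedBall (y j) (lam n * r j)) :
    (∀ n, IsOpen (B n)) ∧ (⋃ n, B n = univ) ∧ LocallyFinite B := by
  -- The formula for `B n` also holds at `n = 0`, where the union is empty.
  have hB : ∀ n, B n = ball (y n) (r n) \ ⋃ j < n, closedBall (y j) (lam n * r j) := by
    intro n
    rcases Nat.eq_zero_or_pos n with rfl | hn
    · simp [hB0]
    · exact hBn n hn
  have hex : ∀ x, ∃ n, x ∈ ball (y n) (r n) := fun x =>
    mem_iUnion.1 (hcov ▸ mem_univ x)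
  refine ⟨fun n => ?_, ?_, fun x => ?_⟩
  · rw [hB]
    exact isOpen_ball.sdiff ((finite_lt_nat n).isClosed_biUnion fun j _ => isClosed_closedBall)
  · classical
    refine eq_univ_of_forall fun x => mem_iUnion.2 ⟨Nat.find (hex x), ?_⟩
    rw [hB]
    refine ⟨Nat.find_spec (hex x), fun hx => ?_⟩
    obtain ⟨j, hj, hxj⟩ := mem_iUnion₂.1 hx
    refine Nat.find_min (hex x) hj (closedBall_subset_ball ?_ hxj)
    exact mul_lt_of_lt_one_left (hr j) (hlam _).2
  · obtain ⟨m, hm⟩ := hex x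
    obtain ⟨t, hxt, htr⟩ := exists_between (mem_ball.1 hm)
    have hlim' : Filter.Tendsto (fun n => lam n * r m) Filter.atTop (nhds (r m)) := by
      simpa using hlim.mul_const (r m)
    obtain ⟨N, hN⟩ := Filter.eventually_atTop.1 (hlim'.eventually (lt_mem_nhds htr))
    refine ⟨ball (y m) t, isOpen_ball.mem_nhds hxt, (finite_le_nat (max N m)).subset ?_⟩
    rintro n ⟨z, hzB, hzt⟩
    by_contra hn
    rw [mem_ofPred_eq, not_le] at hn
    obtain ⟨hNn, hmn⟩ := max_lt_iff.1 hn
    rw [hB] at hzB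
    exact hzB.2 (mem_iUnion₂.2 ⟨m, hmn, ball_subset_closedBall
      (ball_subset_ball (hN n hNn.le).le hzt)⟩)
end
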